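/- (Casten–Holland, Matano) Let Ω ⊂ ℝ^N (N ≥ 2) be a bounded convex open set with boundary of class C², and let f : ℝ → ℝ be continuously differentiable. If u is a weak Neumann solution of −Δu = f(u) in Ω which is of class C² on the closure of Ω and is stable, i.e. ∫_Ω |∇φ|² dx − ∫_Ω f′(u) φ² dx ≥ 0 for every continuously differentiable φ : ℝ^N → ℝ, then u is constant on the closure of Ω. -/

import Mathlib

open MeasureTheory Bornology
open scoped RealInnerProductSpace

/-- `g` is a local `C²` defining function for `Ω` near the boundary point `x`:
`g` is `C²` on the open neighborhood `U` of `x`, with nonvanishing gradient, and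
`Ω ∩ U = {g < 0} ∩ U`.  A bounded open set has boundary of class `C²` if such a defining
function exists near every boundary point. -/
def IsC2LocalDefining {N : ℕ} (Ω : Set (EuclideanSpace ℝ (Fin N)))
    (x : EuclideanSpace ℝ (Fin N)) (U : Set (EuclideanSpace ℝ (Fin N)))
    (g : EuclideanSpace ℝ (Fin N) → ℝ) : Prop :=
  IsOpen U ∧ x ∈ U ∧ ContDiffOn ℝ 2 g U ∧ (∀ y ∈ U, gradient g y ≠ 0) ∧
    Ω ∩ U = {y ∈ U | g y < 0}

/-!
Write `X = ∇u` and `A = D²u`.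

By convexity and the Neumann condition, `y + t X(y) ∉ Ω` for `y ∈ ∂Ω` and `t ≥ 0`, so for small `t`
the image of `Ω` under `x ↦ x + t X(x)` contains `Ω`, and `∫ |det (1 + t A)| ≥ vol Ω`. Since
`∫ tr A = 0`, the coefficient of `t²`, which is `∫ ((tr A)² - tr (A²)) / 2`, is nonnegative. This
is the inequality `∫ tr (A²) ≤ ∫ (tr A)²`.

Testing the equation with `f(u)` identifies `∫ (tr A)² = ∫ f(u)²` with `∫ f'(u) |X|²`. For
`ρ_ε = √(|X|² + ε²)` and `m_ε = X / ρ_ε`, stability tested with `ρ_ε` then bounds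
`∫ (tr (A²) - |A m_ε|²)` by a multiple of `ε²`. By Cauchy–Schwarz in an eigenbasis of `A`, the same
holds for `∫ T_ε²`, where `T_ε = tr A - ⟪A m_ε, m_ε⟫`.

Testing the equation with `u / ρ_ε` gives `∫ |X|² / ρ_ε = -∫ (u / ρ_ε) T_ε`, which is at most
`sup |u| ∫ |T_ε| / ρ_ε`. On `{X = 0}` the function `T_ε = tr A` does not depend on `ε`, hence is
zero almost everywhere, and on `{X ≠ 0}` Cauchy–Schwarz bounds `∫ |T_ε| / ρ_ε` by a multiple of
`(∫_{X ≠ 0} ε² / ρ_ε²)^{1/2}`, which tends to `0`. Hence `∫ |X| = 0`.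
-/

open Filter Topology Set

section Integration

variable {E G : Type*} [NormedAddCommGroup E] [NormedSpace ℝ E] [FiniteDimensional ℝ E]
  [MeasurableSpace E] [BorelSpace E] {μ : Measure E} [NormedAddCommGroup G] {Ω : Set E}

lemma integrableOn_of_continuousOn_closure [IsFiniteMeasureOnCompacts μ] (hΩ : IsBounded Ω)
    {g : E → G} (hg : ContinuousOn g (closure Ω)) : IntegrableOn g Ω μ :=
  (hg.integrableOn_compact hΩ.isCompact_closure).mono_set subset_closure

lemma eqOn_zero_of_setIntegral_eq_zero [IsFiniteMeasureOnCompacts μ] [μ.IsOpenPosMeasure]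
    (hΩ : IsOpen Ω) (hΩb : IsBounded Ω) {g : E → ℝ} (hg : ContinuousOn g (closure Ω))
    (hg_nonneg : ∀ x ∈ Ω, 0 ≤ g x) (hg_int : ∫ x in Ω, g x ∂μ = 0) : EqOn g 0 Ω := by
  rw [setIntegral_eq_zero_iff_of_nonneg_ae
    (ae_restrict_of_forall_mem hΩ.measurableSet hg_nonneg)
    (integrableOn_of_continuousOn_closure hΩb hg)] at hg_int
  exact Measure.eqOn_open_of_ae_eq hg_int hΩ (hg.mono subset_closure) continuousOn_const

lemma continuousOn_setIntegral_of_isCompact [NormedSpace ℝ G] [IsFiniteMeasureOnCompacts μ]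
    {P : Type*} [TopologicalSpace P] [FirstCountableTopology P] {s : Set P} (hs : IsCompact s)
    (hΩ : MeasurableSet Ω) (hΩb : IsBounded Ω) {F : P → E → G}
    (hF : ContinuousOn (Function.uncurry F) (s ×ˢ closure Ω)) :
    ContinuousOn (fun p => ∫ x in Ω, F p x ∂μ) s := by
  obtain ⟨C, hC⟩ := (hs.prod hΩb.isCompact_closure).exists_bound_of_continuousOn hF
  refine continuousOn_of_dominated (bound := fun _ => C) (fun p hp => ?_) (fun p hp => ?_) ?_ ?_
  · exact ((hF.uncurry_left p hp).mono subset_closure).aestronglyMeasurable hΩ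
  · exact ae_restrict_of_forall_mem hΩ fun x hx => hC (p, x) ⟨hp, subset_closure hx⟩
  · exact integrableOn_of_continuousOn_closure hΩb continuousOn_const
  · exact ae_restrict_of_forall_mem hΩ fun x hx => hF.uncurry_right x (subset_closure hx)

end Integration

section UpToBoundary

variable {E F : Type*} [NormedAddCommGroup E] [NormedSpace ℝ E] [NormedAddCommGroup F]
  [NormedSpace ℝ F] {Ω : Set E}

/-- `f` is of class `C¹` up to the boundary of `Ω`, with derivative `f'`: both `f` and `f'` are
continuous on `closure Ω`, while `f'` is only required to be the derivative of `f` inside `Ω`. -/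
structure HasFDerivUpToBoundary (Ω : Set E) (f : E → F) (f' : E → E →L[ℝ] F) : Prop where
  continuousOn : ContinuousOn f (closure Ω)
  continuousOn_deriv : ContinuousOn f' (closure Ω)
  hasFDerivAt : ∀ x ∈ Ω, HasFDerivAt f (f' x) x

namespace HasFDerivUpToBoundary

lemma comp {G : Type*} [NormedAddCommGroup G] [NormedSpace ℝ G] {f : E → F} {f' : E → E →L[ℝ] F}
    (hf : HasFDerivUpToBoundary Ω f f') {g : F → G} {g' : F → F →L[ℝ] G}
    (hg : ∀ y, HasFDerivAt g (g' y) y) (hg' : Continuous g') :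
    HasFDerivUpToBoundary Ω (fun x => g (f x)) (fun x => (g' (f x)).comp (f' x)) where
  continuousOn :=
    (continuous_iff_continuousAt.2 fun y => (hg y).continuousAt).comp_continuousOn hf.continuousOn
  continuousOn_deriv := (hg'.comp_continuousOn hf.continuousOn).clm_comp hf.continuousOn_deriv
  hasFDerivAt x hx := (hg (f x)).comp x (hf.hasFDerivAt x hx)

lemma mul {f g : E → ℝ} {f' g' : E → E →L[ℝ] ℝ} (hf : HasFDerivUpToBoundary Ω f f')
    (hg : HasFDerivUpToBoundary Ω g g') :
    HasFDerivUpToBoundary Ω (fun x => f x * g x) (fun x => f x • g' x + g x • f' x) where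
  continuousOn := hf.continuousOn.mul hg.continuousOn
  continuousOn_deriv := (hf.continuousOn.smul hg.continuousOn_deriv).add
    (hg.continuousOn.smul hf.continuousOn_deriv)
  hasFDerivAt x hx := (hf.hasFDerivAt x hx).mul (hg.hasFDerivAt x hx)

lemma contDiffOn {f : E → F} {f' : E → E →L[ℝ] F} (hΩ : IsOpen Ω)
    (hf : HasFDerivUpToBoundary Ω f f') : ContDiffOn ℝ 1 f Ω := by
  rw [← zero_add 1, contDiffOn_succ_iff_fderiv_of_isOpen hΩ]
  refine ⟨fun x hx => (hf.hasFDerivAt x hx).differentiableAt.differentiableWithinAt,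
    fun h => absurd h (by decide), contDiffOn_zero.2 ?_⟩
  exact (hf.continuousOn_deriv.mono subset_closure).congr fun x hx => (hf.hasFDerivAt x hx).fderiv

lemma of_contDiff {f : E → F} (hf : ContDiff ℝ 1 f) :
    HasFDerivUpToBoundary Ω f (fderiv ℝ f) where
  continuousOn := hf.continuous.continuousOn
  continuousOn_deriv := (hf.continuous_fderiv one_ne_zero).continuousOn
  hasFDerivAt x _ := (hf.differentiable one_ne_zero x).hasFDerivAt

end HasFDerivUpToBoundary

lemma hasFDerivUpToBoundary_fderivWithin (hΩ : IsOpen Ω) {f : E → F}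
    (hf : ContDiffOn ℝ 1 f (closure Ω)) (huniq : UniqueDiffOn ℝ (closure Ω)) :
    HasFDerivUpToBoundary Ω f (fderivWithin ℝ f (closure Ω)) where
  continuousOn := hf.continuousOn
  continuousOn_deriv := hf.continuousOn_fderivWithin huniq le_rfl
  hasFDerivAt x hx :=
    (hf.differentiableOn one_ne_zero x (subset_closure hx)).hasFDerivWithinAt.hasFDerivAt
      (mem_of_superset (hΩ.mem_nhds hx) subset_closure)

end UpToBoundary

section TestFunctions

variable {E : Type*} [NormedAddCommGroup E] [NormedSpace ℝ E] {Ω : Set E}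

lemma homothety_mem_of_mem_closure (hΩ : IsOpen Ω) (hconv : Convex ℝ Ω) {x₀ x : E} (hx₀ : x₀ ∈ Ω)
    (hx : x ∈ closure Ω) {s : ℝ} (hs : s ∈ Ioo 0 1) : AffineMap.homothety x₀ s x ∈ Ω := by
  rw [← hΩ.interior_eq] at hx₀ ⊢
  refine hconv.openSegment_interior_closure_subset_interior hx₀ hx ?_
  rw [AffineMap.homothety_eq_lineMap, openSegment_eq_image_lineMap]
  exact mem_image_of_mem _ hs

variable [FiniteDimensional ℝ E]

lemma exists_contDiff_eventuallyEq_nhdsSet {n : ℕ∞} {K U : Set E} (hK : IsClosed K)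
    (hU : IsOpen U) (hKU : K ⊆ U) {g : E → ℝ} (hg : ContDiffOn ℝ n g U) :
    ∃ G : E → ℝ, ContDiff ℝ n G ∧ G =ᶠ[𝓝ˢ K] g := by
  obtain ⟨W, hW, hKW, hWU⟩ := normal_exists_closure_subset hK hU hKU
  obtain ⟨χ, hχ_one, hχ_zero, -⟩ := exists_contMDiffMap_one_nhds_of_subset_interior
    (n := n) (modelWithCornersSelf ℝ E) hK (hKW.trans (hW.subset_interior_iff.2 subset_closure))
  refine ⟨fun x => χ x * g x, contDiff_iff_contDiffAt.2 fun x => ?_, ?_⟩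
  · by_cases hx : x ∈ U
    · exact χ.contMDiff.contDiff.contDiffAt.mul (hg.contDiffAt (hU.mem_nhds hx))
    · refine contDiffAt_const (c := (0 : ℝ)) |>.congr_of_eventuallyEq ?_
      filter_upwards [isClosed_closure.isOpen_compl.mem_nhds fun h => hx (hWU h)] with y hy
      rw [hχ_zero y hy, zero_mul]
  · filter_upwards [hχ_one] with x hx
    rw [hx, one_mul]

lemma HasFDerivUpToBoundary.exists_contDiff_eq_comp_homothety {φ : E → ℝ} {φ' : E → E →L[ℝ] ℝ}
    (hφ : HasFDerivUpToBoundary Ω φ φ') (hΩ : IsOpen Ω) (hconv : Convex ℝ Ω) {x₀ : E}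
    (hx₀ : x₀ ∈ Ω) {s : ℝ} (hs : s ∈ Ioo 0 1) :
    ∃ Φ : E → ℝ, ContDiff ℝ 1 Φ ∧ ∀ x ∈ Ω, Φ x = φ (AffineMap.homothety x₀ s x) ∧
      fderiv ℝ Φ x = s • φ' (AffineMap.homothety x₀ s x) := by
  have hdil : ∀ x : E, HasFDerivAt (AffineMap.homothety x₀ s) (s • ContinuousLinearMap.id ℝ E) x :=
    fun x => (((hasFDerivAt_id x).sub_const x₀).const_smul s).add_const x₀
  have hdil_smooth : ContDiff ℝ 1 (AffineMap.homothety x₀ s : E → E) :=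
    ((contDiff_id.sub contDiff_const).const_smul s).add contDiff_const
  obtain ⟨Φ, hΦ, hΦ_eq⟩ := exists_contDiff_eventuallyEq_nhdsSet isClosed_closure
    (hΩ.preimage hdil_smooth.continuous)
    (fun x hx => homothety_mem_of_mem_closure hΩ hconv hx₀ hx hs)
    ((hφ.contDiffOn hΩ).comp hdil_smooth.contDiffOn fun _ hx => hx)
  refine ⟨Φ, hΦ, fun x hx => ?_⟩
  have hΦ_eq_nhds : Φ =ᶠ[𝓝 x] φ ∘ AffineMap.homothety x₀ s :=
    hΦ_eq.filter_mono (nhds_le_nhdsSet (subset_closure hx))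
  have hφ_at := hφ.hasFDerivAt _ (homothety_mem_of_mem_closure hΩ hconv hx₀ (subset_closure hx) hs)
  refine ⟨hΦ_eq_nhds.eq_of_nhds, ?_⟩
  rw [hΦ_eq_nhds.fderiv_eq, (hφ_at.comp x (hdil x)).fderiv, ContinuousLinearMap.comp_smul,
    ContinuousLinearMap.comp_id]

variable [MeasurableSpace E] [BorelSpace E] {μ : Measure E} [IsFiniteMeasureOnCompacts μ]

/- On a convex set a function which is `C¹` up to the boundary is approximated, together with its
derivative, by its dilations towards an interior point; these extend to the whole space. -/
lemma HasFDerivUpToBoundary.setIntegral_mem_of_forall_contDiff {φ : E → ℝ} {φ' : E → E →L[ℝ] ℝ}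
    (hφ : HasFDerivUpToBoundary Ω φ φ') (hΩ : IsOpen Ω) (hΩb : IsBounded Ω) (hconv : Convex ℝ Ω)
    (hne : Ω.Nonempty) {J : E × ℝ × (E →L[ℝ] ℝ) → ℝ} (hJ : ContinuousOn J (closure Ω ×ˢ univ))
    {S : Set ℝ} (hS : IsClosed S)
    (hJS : ∀ Φ : E → ℝ, ContDiff ℝ 1 Φ → ∫ x in Ω, J (x, Φ x, fderiv ℝ Φ x) ∂μ ∈ S) :
    ∫ x in Ω, J (x, φ x, φ' x) ∂μ ∈ S := by
  obtain ⟨x₀, hx₀⟩ := hne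
  let h : ℝ → E → E := fun s x => AffineMap.homothety x₀ s x
  have hh : ContinuousOn (Function.uncurry h) (Icc 0 1 ×ˢ closure Ω) := by
    simp only [h, AffineMap.homothety_apply, vsub_eq_sub, vadd_eq_add]
    fun_prop
  have hh_maps : MapsTo (Function.uncurry h) (Icc 0 1 ×ˢ closure Ω) (closure Ω) := by
    rintro ⟨s, x⟩ ⟨hs, hx⟩
    refine hconv.closure.segment_subset (subset_closure hx₀) hx ?_
    simp only [h, AffineMap.homothety_eq_lineMap, segment_eq_image_lineMap, Function.uncurry]
    exact mem_image_of_mem _ hs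
  have hcont : ContinuousOn (fun s => ∫ x in Ω, J (x, φ (h s x), s • φ' (h s x)) ∂μ) (Icc 0 1) := by
    refine continuousOn_setIntegral_of_isCompact isCompact_Icc hΩ.measurableSet hΩb ?_
    refine hJ.comp (continuousOn_snd.prodMk ((hφ.continuousOn.comp hh hh_maps).prodMk
      (continuousOn_fst.smul (hφ.continuousOn_deriv.comp hh hh_maps)))) fun p hp => ⟨hp.2, trivial⟩
  have hlim := (hcont 1 (right_mem_Icc.2 zero_le_one)).tendsto.mono_left
    (nhdsWithin_mono _ Ioo_subset_Icc_self)
  simp only [h, AffineMap.homothety_one, AffineMap.id_apply, one_smul] at hlim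
  have : (𝓝[Ioo 0 1] (1 : ℝ)).NeBot := right_nhdsWithin_Ioo_neBot zero_lt_one
  refine hS.mem_of_tendsto hlim (eventually_mem_nhdsWithin.mono fun s hs => ?_)
  obtain ⟨Φ, hΦ, hΦ_eq⟩ := hφ.exists_contDiff_eq_comp_homothety hΩ hconv hx₀ hs
  convert hJS Φ hΦ using 1
  refine setIntegral_congr_fun hΩ.measurableSet fun x hx => ?_
  simp only [(hΦ_eq x hx).1, (hΦ_eq x hx).2]

end TestFunctions

section Trace

variable {E : Type*} [NormedAddCommGroup E] [NormedSpace ℝ E] [FiniteDimensional ℝ E]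

/-- The trace as a continuous linear functional on the endomorphisms of `E`. -/
noncomputable def traceCLM : (E →L[ℝ] E) →L[ℝ] ℝ :=
  (LinearMap.trace ℝ E ∘ₗ ContinuousLinearMap.coeLM ℝ).toContinuousLinearMap

lemma traceCLM_apply (A : E →L[ℝ] E) : traceCLM A = LinearMap.trace ℝ E A := rfl

lemma traceCLM_smulRight (l : E →L[ℝ] ℝ) (v : E) : traceCLM (l.smulRight v) = l v :=
  LinearMap.trace_smulRight (l : E →ₗ[ℝ] ℝ) v

end Trace

section WeakNeumannField

variable {E : Type*} [NormedAddCommGroup E] [InnerProductSpace ℝ E] [FiniteDimensional ℝ E]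
  [MeasurableSpace E] [BorelSpace E] {Ω : Set E} {X : E → E} {h c : E → ℝ}

/-- Weak formulation of `-div X = h` in `Ω` together with the no-flux condition `X · ν = 0` on the
boundary. The weak Neumann solutions of `-Δu = f(u)` are the `u` such that this holds for `X = ∇u`
and `h = f ∘ u`. -/
def IsWeakNeumannField (Ω : Set E) (X : E → E) (h : E → ℝ) : Prop :=
  ∀ φ : E → ℝ, ContDiff ℝ 1 φ → ∫ x in Ω, fderiv ℝ φ x (X x) = ∫ x in Ω, h x * φ x

/-- Nonnegativity on `C¹` test functions of the quadratic form of `-Δ - c` with Neumann boundary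
conditions. A solution `u` of `-Δu = f(u)` is stable if this holds for `c = f' ∘ u`. -/
def IsStablePotential (Ω : Set E) (c : E → ℝ) : Prop :=
  ∀ φ : E → ℝ, ContDiff ℝ 1 φ → ∫ x in Ω, c x * φ x ^ 2 ≤ ∫ x in Ω, ‖fderiv ℝ φ x‖ ^ 2

lemma IsWeakNeumannField.setIntegral_eq (hXh : IsWeakNeumannField Ω X h) (hΩ : IsOpen Ω)
    (hΩb : IsBounded Ω) (hconv : Convex ℝ Ω) (hne : Ω.Nonempty) (hX : ContinuousOn X (closure Ω))
    (hh : ContinuousOn h (closure Ω)) {φ : E → ℝ} {φ' : E → E →L[ℝ] ℝ}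
    (hφ : HasFDerivUpToBoundary Ω φ φ') : ∫ x in Ω, φ' x (X x) = ∫ x in Ω, h x * φ x := by
  have hint : ∀ {ψ : E → ℝ} {ψ' : E → E →L[ℝ] ℝ}, HasFDerivUpToBoundary Ω ψ ψ' →
      ∫ x in Ω, (ψ' x (X x) - h x * ψ x) = (∫ x in Ω, ψ' x (X x)) - ∫ x in Ω, h x * ψ x :=
    fun hψ => integral_sub
      (integrableOn_of_continuousOn_closure hΩb (hψ.continuousOn_deriv.clm_apply hX))
      (integrableOn_of_continuousOn_closure hΩb (hh.mul hψ.continuousOn))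
  rw [← sub_eq_zero, ← hint hφ]
  refine hφ.setIntegral_mem_of_forall_contDiff hΩ hΩb hconv hne (S := {0})
    (J := fun p => p.2.2 (X p.1) - h p.1 * p.2.1) ?_ isClosed_singleton fun Φ hΦ => ?_
  · exact (ContinuousOn.clm_apply (by fun_prop) (hX.comp continuousOn_fst mapsTo_fst_prod)).sub
      ((hh.comp continuousOn_fst mapsTo_fst_prod).mul (by fun_prop))
  · rw [mem_singleton_iff, hint (.of_contDiff hΦ), hXh Φ hΦ, sub_self]

lemma IsStablePotential.setIntegral_le (hc : IsStablePotential Ω c) (hΩ : IsOpen Ω)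
    (hΩb : IsBounded Ω) (hconv : Convex ℝ Ω) (hne : Ω.Nonempty)
    (hc_cont : ContinuousOn c (closure Ω)) {φ : E → ℝ} {φ' : E → E →L[ℝ] ℝ}
    (hφ : HasFDerivUpToBoundary Ω φ φ') :
    ∫ x in Ω, c x * φ x ^ 2 ≤ ∫ x in Ω, ‖φ' x‖ ^ 2 := by
  have hint : ∀ {ψ : E → ℝ} {ψ' : E → E →L[ℝ] ℝ}, HasFDerivUpToBoundary Ω ψ ψ' →
      ∫ x in Ω, (‖ψ' x‖ ^ 2 - c x * ψ x ^ 2) =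
        (∫ x in Ω, ‖ψ' x‖ ^ 2) - ∫ x in Ω, c x * ψ x ^ 2 :=
    fun hψ => integral_sub
      (integrableOn_of_continuousOn_closure hΩb (hψ.continuousOn_deriv.norm.pow 2))
      (integrableOn_of_continuousOn_closure hΩb (hc_cont.mul (hψ.continuousOn.pow 2)))
  rw [← sub_nonneg, ← hint hφ]
  refine hφ.setIntegral_mem_of_forall_contDiff hΩ hΩb hconv hne (S := Ici 0)
    (J := fun p => ‖p.2.2‖ ^ 2 - c p.1 * p.2.1 ^ 2) ?_ isClosed_Ici fun Φ hΦ => ?_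
  · exact ContinuousOn.sub (by fun_prop)
      ((hc_cont.comp continuousOn_fst mapsTo_fst_prod).mul (by fun_prop))
  · rw [mem_Ici, hint (.of_contDiff hΦ), sub_nonneg]
    exact hc Φ hΦ

lemma setIntegral_eq_zero_of_hasFDerivAt {F : Type*} [NormedAddCommGroup F] [NormedSpace ℝ F]
    {s : Set E} {Y : E → F} {Y' : E → E →L[ℝ] F} (hY : ∀ x, HasFDerivAt Y (Y' x) x)
    (hY_int : IntegrableOn Y s) (hY'_int : IntegrableOn Y' s) (hY_zero : ∀ x ∉ s, Y x = 0)
    (hY'_zero : ∀ x ∉ s, Y' x = 0) : ∫ x in s, Y' x = 0 := by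
  ext v
  have hY'v_zero : ∀ x ∉ s, Y' x v = 0 := fun x hx => by
    rw [hY'_zero x hx, zero_apply]
  have hY'v_int : IntegrableOn (fun x => Y' x v) s := hY'_int.apply_continuousLinearMap v
  rw [ContinuousLinearMap.integral_apply hY'_int,
    setIntegral_eq_integral_of_forall_compl_eq_zero hY'v_zero]
  simpa using integral_bilinear_hasFDerivAt_right_eq_neg_left_of_integrable (v := v)
    (B := ContinuousLinearMap.lsmul ℝ ℝ) (f := fun _ : E => (1 : ℝ)) (f' := 0) (by simp)
    (by simpa using hY'v_int.integrable_of_forall_notMem_eq_zero hY'v_zero)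
    (by simpa using hY_int.integrable_of_forall_notMem_eq_zero hY_zero)
    (fun x _ => hasFDerivAt_const 1 x) (fun x _ => hY x)

lemma setIntegral_trace_eq_of_tsupport_subset (hΩb : IsBounded Ω)
    {A : E → E →L[ℝ] E} (hX : HasFDerivUpToBoundary Ω X A) {g : E → ℝ} (hg : ContDiff ℝ 1 g)
    (hgΩ : tsupport g ⊆ Ω) :
    ∫ x in Ω, fderiv ℝ g x (X x) = -∫ x in Ω, g x * traceCLM (A x) := by
  let Y' : E → E →L[ℝ] E := fun x => g x • A x + (fderiv ℝ g x).smulRight (X x)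
  have hg_off : ∀ x ∉ Ω, x ∉ tsupport g := fun x hx h => hx (hgΩ h)
  have hg_zero : ∀ x ∉ Ω, g x = 0 := fun x hx => image_eq_zero_of_notMem_tsupport (hg_off x hx)
  have hY'_zero : ∀ x ∉ Ω, Y' x = 0 := fun x hx => by
    simp [Y', hg_zero x hx, fderiv_of_notMem_tsupport ℝ (hg_off x hx)]
  have hY : ∀ x, HasFDerivAt (fun x => g x • X x) (Y' x) x := fun x => by
    by_cases hx : x ∈ Ω
    · exact (hg.differentiable one_ne_zero x).hasFDerivAt.smul (hX.hasFDerivAt x hx)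
    · rw [hY'_zero x hx]
      refine (hasFDerivAt_const 0 x).congr_of_eventuallyEq ?_
      filter_upwards [notMem_tsupport_iff_eventuallyEq.1 (hg_off x hx)] with y hy
      simp [hy]
  have hgA : ContinuousOn (fun x => g x • A x) (closure Ω) :=
    hg.continuous.continuousOn.smul hX.continuousOn_deriv
  have hgX : ContinuousOn (fun x => (fderiv ℝ g x).smulRight (X x)) (closure Ω) :=
    ((ContinuousLinearMap.smulRightL ℝ E E).continuous.comp
      (hg.continuous_fderiv one_ne_zero)).continuousOn.clm_apply hX.continuousOn
  have hY'_int : IntegrableOn Y' Ω := integrableOn_of_continuousOn_closure hΩb (hgA.add hgX)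
  have hY_int : IntegrableOn (fun x => g x • X x) Ω :=
    integrableOn_of_continuousOn_closure hΩb (hg.continuous.continuousOn.smul hX.continuousOn)
  have hzero : ∫ x in Ω, Y' x = 0 := setIntegral_eq_zero_of_hasFDerivAt hY hY_int hY'_int
    (fun x hx => by rw [hg_zero x hx, zero_smul]) hY'_zero
  have htr := traceCLM.integral_comp_comm hY'_int
  simp only [hzero, Y', map_add, map_smul, map_zero, traceCLM_smulRight, smul_eq_mul] at htr
  rw [integral_add, add_comm] at htr
  · exact eq_neg_of_add_eq_zero_left htr
  · exact integrableOn_of_continuousOn_closure hΩb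
      (hg.continuous.continuousOn.mul (traceCLM.continuous.comp_continuousOn hX.continuousOn_deriv))
  · exact integrableOn_of_continuousOn_closure hΩb
      ((hg.continuous_fderiv one_ne_zero).continuousOn.clm_apply hX.continuousOn)

lemma IsWeakNeumannField.trace_eq_neg (hXh : IsWeakNeumannField Ω X h) (hΩ : IsOpen Ω)
    (hΩb : IsBounded Ω) {A : E → E →L[ℝ] E} (hX : HasFDerivUpToBoundary Ω X A)
    (hh : ContinuousOn h (closure Ω)) : ∀ x ∈ Ω, traceCLM (A x) = -h x := by
  have htr : ContinuousOn (fun x => traceCLM (A x)) (closure Ω) :=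
    traceCLM.continuous.comp_continuousOn hX.continuousOn_deriv
  have hsum_int : IntegrableOn (fun x => traceCLM (A x) + h x) Ω :=
    integrableOn_of_continuousOn_closure hΩb (htr.add hh)
  have hsum_ae : ∀ᵐ x, x ∈ Ω → traceCLM (A x) + h x = 0 := by
    refine hΩ.ae_eq_zero_of_integral_contDiff_smul_eq_zero hsum_int.locallyIntegrableOn
      fun g hg _ hgΩ => ?_
    have hg₁ : ContDiff ℝ 1 g := hg.of_le (by exact_mod_cast le_top)
    rw [← setIntegral_eq_integral_of_forall_compl_eq_zero (s := Ω) fun x hx => by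
      rw [image_eq_zero_of_notMem_tsupport fun h => hx (hgΩ h), zero_smul]]
    simp only [smul_eq_mul, mul_add, mul_comm (g _) (h _)]
    rw [integral_add, ← hXh g hg₁, setIntegral_trace_eq_of_tsupport_subset hΩb hX hg₁ hgΩ,
      add_neg_cancel]
    · exact integrableOn_of_continuousOn_closure hΩb (hg₁.continuous.continuousOn.mul htr)
    · exact integrableOn_of_continuousOn_closure hΩb (hh.mul hg₁.continuous.continuousOn)
  have hsum_eqOn : EqOn (fun x => traceCLM (A x) + h x) 0 Ω :=
    Measure.eqOn_open_of_ae_eq ((ae_restrict_iff' hΩ.measurableSet).2 hsum_ae) hΩ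
      ((htr.add hh).mono subset_closure) continuousOn_const
  exact fun x hx => eq_neg_of_add_eq_zero_left (hsum_eqOn hx)

lemma hasDerivAt_max_zero_sq (s : ℝ) : HasDerivAt (fun s : ℝ => max s 0 ^ 2) (2 * max s 0) s := by
  rcases lt_trichotomy s 0 with hs | rfl | hs
  · rw [max_eq_right hs.le, mul_zero]
    refine (hasDerivAt_const s (0 : ℝ)).congr_of_eventuallyEq ?_
    filter_upwards [Iio_mem_nhds hs] with y hy
    rw [max_eq_right (le_of_lt hy), zero_pow two_ne_zero]
  · rw [max_self, mul_zero, hasDerivAt_iff_isLittleO_nhds_zero]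
    refine Asymptotics.IsBigO.trans_isLittleO (.of_bound 1 (.of_forall fun s => ?_))
      (Asymptotics.isLittleO_pow_id one_lt_two)
    rcases le_total s 0 with hs | hs <;> simp [hs, sq_nonneg]
  · rw [max_eq_left hs.le]
    refine HasDerivAt.congr_of_eventuallyEq (by simpa using hasDerivAt_pow 2 s) ?_
    filter_upwards [Ioi_mem_nhds hs] with y hy
    rw [max_eq_left (le_of_lt hy)]

lemma contDiff_max_zero_sq : ContDiff ℝ 1 (fun s : ℝ => max s 0 ^ 2) := by
  refine contDiff_one_iff_deriv.2 ⟨fun s => (hasDerivAt_max_zero_sq s).differentiableAt, ?_⟩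
  rw [funext fun s => (hasDerivAt_max_zero_sq s).deriv]
  fun_prop

lemma IsWeakNeumannField.setIntegral_max_zero_eq_zero (hXh : IsWeakNeumannField Ω X h)
    (hΩb : IsBounded Ω) (hX : ContinuousOn X (closure Ω)) (hh : ContinuousOn h (closure Ω))
    {q : E → ℝ} (hq : ContDiff ℝ 1 q) :
    ∫ x in Ω, max (q x) 0 * (h x * max (q x) 0 - 2 * fderiv ℝ q x (X x)) = 0 := by
  have hderiv : ∀ x, fderiv ℝ (fun x => max (q x) 0 ^ 2) x = (2 * max (q x) 0) • fderiv ℝ q x :=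
    fun x => ((hasDerivAt_max_zero_sq (q x)).comp_hasFDerivAt x
      (hq.differentiable one_ne_zero x).hasFDerivAt).fderiv
  have hq_max : ContinuousOn (fun x => max (q x) 0) (closure Ω) :=
    (hq.continuous.max continuous_const).continuousOn
  have htest := hXh _ (contDiff_max_zero_sq.comp hq)
  simp only [Function.comp_def, hderiv, smul_apply, smul_eq_mul] at htest
  have hsub := sub_eq_zero.2 htest.symm
  rw [← integral_sub] at hsub
  · refine Eq.trans (integral_congr_ae (.of_forall fun x => ?_)) hsub
    ring
  · exact integrableOn_of_continuousOn_closure hΩb (hh.mul (hq_max.pow 2))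
  · exact integrableOn_of_continuousOn_closure hΩb ((continuousOn_const.mul hq_max).mul
      ((hq.continuous_fderiv one_ne_zero).continuousOn.clm_apply hX))

lemma IsWeakNeumannField.nonpos_of_forall_pos (hXh : IsWeakNeumannField Ω X h) (hΩ : IsOpen Ω)
    (hΩb : IsBounded Ω) (hX : ContinuousOn X (closure Ω)) (hh : ContinuousOn h (closure Ω))
    {q : E → ℝ} (hq : ContDiff ℝ 1 q)
    (hpos : ∀ x ∈ Ω, 0 < q x → 0 < h x * q x - 2 * fderiv ℝ q x (X x)) : ∀ x ∈ Ω, q x ≤ 0 := by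
  have hq_max : ContinuousOn (fun x => max (q x) 0) (closure Ω) :=
    (hq.continuous.max continuous_const).continuousOn
  have hcont : ContinuousOn
      (fun x => max (q x) 0 * (h x * max (q x) 0 - 2 * fderiv ℝ q x (X x))) (closure Ω) :=
    hq_max.mul ((hh.mul hq_max).sub (continuousOn_const.mul
      ((hq.continuous_fderiv one_ne_zero).continuousOn.clm_apply hX)))
  have hzero := eqOn_zero_of_setIntegral_eq_zero hΩ hΩb hcont (fun x hx => ?_)
    (hXh.setIntegral_max_zero_eq_zero hΩb hX hh hq)
  · intro x hx
    by_contra! hqx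
    have hzero_x := hzero hx
    simp only [max_eq_left hqx.le, Pi.zero_apply] at hzero_x
    exact (mul_pos hqx (hpos x hx hqx)).ne' hzero_x
  · rcases le_or_gt (q x) 0 with hqx | hqx
    · rw [max_eq_right hqx, zero_mul]
    · rw [max_eq_left hqx.le]
      exact (mul_pos hqx (hpos x hx hqx)).le

/- Near `y` the equation is tested with the square of the positive part of a downward paraboloid
whose tangent at `y` is the supporting functional `l`; in `Ω` it is positive only close to `y`. -/
lemma IsWeakNeumannField.nonneg_of_forall_lt (hXh : IsWeakNeumannField Ω X h) (hΩ : IsOpen Ω)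
    (hΩb : IsBounded Ω) (hX : ContinuousOn X (closure Ω)) (hh : ContinuousOn h (closure Ω))
    {y : E} (hy : y ∈ closure Ω) {l : E →L[ℝ] ℝ} (hl : ∀ x ∈ Ω, l x < l y) : 0 ≤ l (X y) := by
  by_contra! hXy
  let G : E → ℝ := fun x => l (X x) - 2 * ⟪x - y, X x⟫
  have hG : ContinuousOn G (closure Ω) := by fun_prop
  have hcont : ContinuousOn (fun p : E × ℝ => h p.1 * p.2 - 2 * G p.1) (closure Ω ×ˢ univ) :=
    ((hh.comp continuousOn_fst mapsTo_fst_prod).mul continuousOn_snd).sub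
      (continuousOn_const.mul (hG.comp continuousOn_fst mapsTo_fst_prod))
  have hpos : 0 < h y * 0 - 2 * G y := by
    simp only [G, sub_self, inner_zero_left]
    linarith
  have hnear := (hcont (y, 0) (mk_mem_prod hy (mem_univ 0))).eventually_const_lt hpos
  obtain ⟨r, hr, hball⟩ := Metric.mem_nhdsWithin_iff.1 hnear
  obtain ⟨δ, hδ, hδr⟩ := exists_between (lt_min hr (sq_pos_of_pos hr))
  let q : E → ℝ := fun x => l (x - y) - ‖x - y‖ ^ 2 + δ
  have hq_deriv : ∀ x, HasFDerivAt q (l - (2 : ℝ) • innerSL ℝ (x - y)) x := fun x => by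
    have hsub := (hasFDerivAt_id (𝕜 := ℝ) x).sub_const y
    have hsum := ((l.hasFDerivAt.comp x hsub).sub hsub.norm_sq).add_const δ
    rwa [ContinuousLinearMap.comp_id, ContinuousLinearMap.comp_id,
      ← Nat.cast_smul_eq_nsmul ℝ, Nat.cast_ofNat] at hsum
  have hq : ContDiff ℝ 1 q :=
    contDiff_one_iff_hasFDerivAt.2 ⟨_, by fun_prop, hq_deriv⟩
  have hqΩ : ∀ x ∈ Ω, q x ≤ 0 := by
    refine hXh.nonpos_of_forall_pos hΩ hΩb hX hh hq fun x hx hqx => ?_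
    have hlx : l (x - y) < 0 := by rw [map_sub, sub_neg]; exact hl x hx
    have hxr : ‖x - y‖ < r := by
      refine lt_of_pow_lt_pow_left₀ 2 hr.le ?_
      linarith [lt_min_iff.1 hδr]
    have hqr : q x < r := by linarith [lt_min_iff.1 hδr, sq_nonneg ‖x - y‖]
    have hmem : (x, q x) ∈ Metric.ball (y, (0 : ℝ)) r := by
      rw [← ball_prod_same]
      exact ⟨by rwa [mem_ball_iff_norm], by rwa [mem_ball_zero_iff, Real.norm_of_nonneg hqx.le]⟩
    have hG_eq : fderiv ℝ q x (X x) = G x := by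
      simp [(hq_deriv x).fderiv, G, inner_sub_left]
    rw [hG_eq]
    exact hball ⟨hmem, subset_closure hx, mem_univ _⟩
  have hqy : q y ≤ 0 := closure_minimal hqΩ (isClosed_le hq.continuous continuous_const) hy
  simp only [q, sub_self, map_zero, norm_zero] at hqy
  linarith

lemma IsWeakNeumannField.add_smul_notMem (hXh : IsWeakNeumannField Ω X h) (hΩ : IsOpen Ω)
    (hΩb : IsBounded Ω) (hconv : Convex ℝ Ω) (hX : ContinuousOn X (closure Ω))
    (hh : ContinuousOn h (closure Ω)) {y : E} (hy : y ∈ frontier Ω) {t : ℝ} (ht : 0 ≤ t) :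
    y + t • X y ∉ Ω := by
  rw [hΩ.frontier_eq] at hy
  obtain ⟨l, hl⟩ := geometric_hahn_banach_open_point hconv hΩ hy.2
  intro hmem
  have hlt := hl _ hmem
  rw [map_add, map_smul, smul_eq_mul] at hlt
  linarith [mul_nonneg ht (hXh.nonneg_of_forall_lt hΩ hΩb hX hh hy.1 hl)]

end WeakNeumannField

section SymmetricOperator

lemma exists_forall_abs_prod_one_add_sub_le {ι : Type*} (s : Finset ι) :
    ∃ C : ℝ, ∀ (x : ι → ℝ) (τ : ℝ), τ ≤ 1 → (∀ i, |x i| ≤ τ) →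
      |∏ i ∈ s, (1 + x i) - (1 + ∑ i ∈ s, x i + ((∑ i ∈ s, x i) ^ 2 - ∑ i ∈ s, x i ^ 2) / 2)|
        ≤ C * τ ^ 3 := by
  classical
  induction s using Finset.induction_on with
  | empty => exact ⟨0, fun x τ _ _ => by simp⟩
  | insert a s ha ih =>
    obtain ⟨C, h⟩ := ih
    set n : ℝ := (s.card : ℝ) with hn
    refine ⟨n ^ 2 + n + 2 * C, fun x τ hτ hx => ?_⟩
    rw [Finset.sum_insert ha, Finset.sum_insert ha, Finset.prod_insert ha]
    set S₁ := ∑ i ∈ s, x i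
    set S₂ := ∑ i ∈ s, x i ^ 2
    set P := ∏ i ∈ s, (1 + x i)
    have hτ₀ : 0 ≤ τ := (abs_nonneg _).trans (hx a)
    have hS₁ : |S₁| ≤ n * τ := by
      simpa [hn] using (Finset.abs_sum_le_sum_abs x s).trans
        (Finset.sum_le_card_nsmul s _ τ fun i _ => hx i)
    have hS₂ : S₂ ≤ n * τ ^ 2 := by
      simpa [hn] using Finset.sum_le_card_nsmul s _ (τ ^ 2) fun i _ => sq_le_sq.2
        ((hx i).trans_eq (abs_of_nonneg hτ₀).symm)
    have hS₂_nonneg : 0 ≤ S₂ := Finset.sum_nonneg fun i _ => sq_nonneg (x i)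
    have hquad : |(S₁ ^ 2 - S₂) / 2| ≤ (n ^ 2 + n) * τ ^ 2 := by
      have hS₁_sq : S₁ ^ 2 ≤ (n * τ) ^ 2 := sq_le_sq.2 (hS₁.trans (le_abs_self _))
      rw [abs_le]
      constructor <;> nlinarith [sq_nonneg S₁]
    have hfactor : |1 + x a| ≤ 2 := by
      linarith [abs_add_le 1 (x a), hx a, abs_one (α := ℝ)]
    calc |(1 + x a) * P - (1 + (x a + S₁) + ((x a + S₁) ^ 2 - (x a ^ 2 + S₂)) / 2)|
        = |x a * ((S₁ ^ 2 - S₂) / 2) + (1 + x a) * (P - (1 + S₁ + (S₁ ^ 2 - S₂) / 2))| := by ring_nf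
      _ ≤ |x a| * |(S₁ ^ 2 - S₂) / 2| + |1 + x a| * |P - (1 + S₁ + (S₁ ^ 2 - S₂) / 2)| := by
        simpa only [abs_mul] using abs_add_le (x a * _) ((1 + x a) * _)
      _ ≤ τ * ((n ^ 2 + n) * τ ^ 2) + 2 * (C * τ ^ 3) := by
        gcongr
        exacts [hx a, h x τ hτ hx]
      _ = (n ^ 2 + n + 2 * C) * τ ^ 3 := by ring

variable {E : Type*} [NormedAddCommGroup E] [InnerProductSpace ℝ E] [FiniteDimensional ℝ E]
  {A : E →L[ℝ] E} (hA : (A : E →ₗ[ℝ] E).IsSymmetric)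

lemma traceCLM_eq_sum_eigenvalues : traceCLM A = ∑ i, hA.eigenvalues rfl i := by
  simpa [traceCLM_apply] using hA.trace_eq_sum_eigenvalues rfl

lemma apply_eigenvectorBasis_eq_smul (i : Fin (Module.finrank ℝ E)) :
    A (hA.eigenvectorBasis rfl i) = hA.eigenvalues rfl i • hA.eigenvectorBasis rfl i :=
  hA.apply_eigenvectorBasis rfl i

lemma traceCLM_comp_self_eq_sum_eigenvalues_sq :
    traceCLM (A ∘L A) = ∑ i, hA.eigenvalues rfl i ^ 2 := by
  rw [traceCLM_apply, LinearMap.trace_eq_sum_inner _ (hA.eigenvectorBasis rfl)]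
  refine Finset.sum_congr rfl fun i _ => ?_
  simp [apply_eigenvectorBasis_eq_smul hA, inner_smul_right, pow_two]

lemma det_id_add_smul_eq_prod_eigenvalues (t : ℝ) :
    (ContinuousLinearMap.id ℝ E + t • A).det = ∏ i, (1 + t * hA.eigenvalues rfl i) := by
  let b := (hA.eigenvectorBasis rfl).toBasis
  have hdiag : LinearMap.toMatrix b b (A : E →ₗ[ℝ] E) =
      Matrix.diagonal (hA.eigenvalues rfl) := hA.toMatrix_eigenvectorBasis rfl
  rw [ContinuousLinearMap.det, ← LinearMap.det_toMatrix b, ContinuousLinearMap.toLinearMap_add,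
    ContinuousLinearMap.toLinearMap_smul, ContinuousLinearMap.coe_id, map_add, map_smul,
    LinearMap.toMatrix_id, hdiag, ← Matrix.diagonal_one, ← Matrix.diagonal_smul,
    Matrix.diagonal_add, Matrix.det_diagonal]
  rfl

lemma abs_eigenvalues_le_opNorm (i : Fin (Module.finrank ℝ E)) : |hA.eigenvalues rfl i| ≤ ‖A‖ := by
  simpa [apply_eigenvectorBasis_eq_smul hA, norm_smul] using A.le_opNorm (hA.eigenvectorBasis rfl i)

lemma exists_forall_abs_det_id_add_smul_le (M : ℝ) :
    ∃ C : ℝ, ∀ (A : E →L[ℝ] E) (t : ℝ), (A : E →ₗ[ℝ] E).IsSymmetric → ‖A‖ ≤ M → 0 ≤ t →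
      t * M ≤ 1 → |(ContinuousLinearMap.id ℝ E + t • A).det| ≤
        1 + t * traceCLM A + t ^ 2 / 2 * (traceCLM A ^ 2 - traceCLM (A ∘L A)) + C * t ^ 3 := by
  obtain ⟨C, hprod⟩ :=
    exists_forall_abs_prod_one_add_sub_le (Finset.univ : Finset (Fin (Module.finrank ℝ E)))
  refine ⟨C * M ^ 3, fun A t hA hAM ht htM => ?_⟩
  have heig : ∀ i, |t * hA.eigenvalues rfl i| ≤ t * M := fun i => by
    rw [abs_mul, abs_of_nonneg ht]
    exact mul_le_mul_of_nonneg_left ((abs_eigenvalues_le_opNorm hA i).trans hAM) ht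
  have hdet_nonneg : 0 ≤ ∏ i, (1 + t * hA.eigenvalues rfl i) :=
    Finset.prod_nonneg fun i _ => by linarith [(abs_le.1 (heig i)).1]
  have hbound := (abs_le.1 (hprod _ _ htM heig)).2
  simp only [mul_pow, ← Finset.mul_sum, ← traceCLM_eq_sum_eigenvalues,
    ← traceCLM_comp_self_eq_sum_eigenvalues_sq] at hbound
  rw [det_id_add_smul_eq_prod_eigenvalues hA, abs_of_nonneg hdet_nonneg]
  linarith

/-- The part of the trace of `A` not accounted for by the direction `m`. For a unit vector `m` it is
the trace of the compression of `A` to the orthogonal complement of `m`. -/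
noncomputable def transverseTrace (A : E →L[ℝ] E) (m : E) : ℝ := traceCLM A - ⟪A m, m⟫

lemma transverseTrace_sq_le (hA : (A : E →ₗ[ℝ] E).IsSymmetric) {m : E} (hm : ‖m‖ ≤ 1) :
    transverseTrace A m ^ 2 ≤ Module.finrank ℝ E * (traceCLM (A ∘L A) - ‖A m‖ ^ 2) := by
  let b := hA.eigenvectorBasis rfl
  let w : Fin (Module.finrank ℝ E) → ℝ := fun i => 1 - ⟪b i, m⟫ ^ 2
  have hAm : ∀ i, ⟪b i, A m⟫ = hA.eigenvalues rfl i * ⟪b i, m⟫ := fun i => by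
    rw [← b.repr_apply_apply, ← b.repr_apply_apply]
    exact hA.eigenvectorBasis_apply_self_apply rfl m i
  have hw_nonneg : ∀ i, 0 ≤ w i := fun i => by
    have hbm : |⟪b i, m⟫| ≤ 1 := (abs_real_inner_le_norm (b i) m).trans (by simpa using hm)
    exact sub_nonneg.2 ((sq_le_one_iff_abs_le_one _).2 hbm)
  have htrace : transverseTrace A m = ∑ i, hA.eigenvalues rfl i * w i := by
    rw [transverseTrace, traceCLM_eq_sum_eigenvalues hA, ← b.sum_inner_mul_inner,
      ← Finset.sum_sub_distrib]
    refine Finset.sum_congr rfl fun i _ => ?_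
    rw [real_inner_comm, hAm]
    ring
  have hsq : traceCLM (A ∘L A) - ‖A m‖ ^ 2 = ∑ i, hA.eigenvalues rfl i ^ 2 * w i := by
    rw [traceCLM_comp_self_eq_sum_eigenvalues_sq hA, ← b.sum_sq_inner_right,
      ← Finset.sum_sub_distrib]
    refine Finset.sum_congr rfl fun i _ => ?_
    rw [hAm]
    ring
  calc transverseTrace A m ^ 2
      ≤ (∑ i, w i) * ∑ i, hA.eigenvalues rfl i ^ 2 * w i := by
        rw [htrace]
        exact Finset.sum_sq_le_sum_mul_sum_of_sq_le_mul _ (fun i _ => hw_nonneg i)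
          (fun i _ => mul_nonneg (sq_nonneg _) (hw_nonneg i)) fun i _ => le_of_eq (by ring)
    _ ≤ Module.finrank ℝ E * (traceCLM (A ∘L A) - ‖A m‖ ^ 2) := by
        rw [hsq]
        refine mul_le_mul_of_nonneg_right ?_
          (Finset.sum_nonneg fun i _ => mul_nonneg (sq_nonneg _) (hw_nonneg i))
        simpa using Finset.sum_le_card_nsmul Finset.univ w 1 fun i _ =>
          sub_le_self 1 (sq_nonneg _)

end SymmetricOperator

section VolumeExpansion

variable {E : Type*} [NormedAddCommGroup E]

lemma map_nhds_add_smul_eq [NormedSpace ℝ E] [CompleteSpace E] {X : E → E} {A : E →L[ℝ] E} {x : E}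
    {t : ℝ} (hX : HasStrictFDerivAt X A x) (htA : ‖t • A‖ < 1) :
    map (fun x => x + t • X x) (𝓝 x) = 𝓝 (x + t • X x) := by
  let e : E ≃L[ℝ] E := .ofUnit (Units.oneSub (-(t • A)) (by rwa [norm_neg]))
  have he : HasStrictFDerivAt (fun x => x + t • X x) (e : E →L[ℝ] E) x := by
    rw [show (e : E →L[ℝ] E) = 1 - -(t • A) from rfl, sub_neg_eq_add]
    exact (hasStrictFDerivAt_id x).add (hX.const_smul t)
  exact he.map_nhds_eq_of_equiv

lemma eventually_mul_lt_one_nhdsGT (M : ℝ) : ∀ᶠ t in 𝓝[>] (0 : ℝ), t * M < 1 :=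
  nhdsWithin_le_nhds (((continuous_mul_const M).tendsto' 0 0 (zero_mul M)).eventually_lt_const
    one_pos)

lemma HasFDerivUpToBoundary.subset_image_add_smul [NormedSpace ℝ E] [FiniteDimensional ℝ E]
    {Ω : Set E} {X : E → E} {A : E → E →L[ℝ] E} (hX : HasFDerivUpToBoundary Ω X A)
    (hΩ : IsOpen Ω) (hΩb : IsBounded Ω) (hconn : IsPreconnected Ω) {t : ℝ}
    (htA : ∀ x ∈ Ω, ‖t • A x‖ < 1) (hmeet : ∃ x ∈ Ω, x + t • X x ∈ Ω)
    (hbdry : ∀ y ∈ frontier Ω, y + t • X y ∉ Ω) : Ω ⊆ (fun x => x + t • X x) '' Ω := by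
  obtain ⟨x₀, hx₀, hx₀t⟩ := hmeet
  refine hconn.subset_of_closure_inter_subset ?_ ⟨_, hx₀t, x₀, hx₀, rfl⟩ ?_
  · rw [isOpen_iff_mem_nhds]
    rintro _ ⟨x, hx, rfl⟩
    have hstrict : HasStrictFDerivAt X (A x) x := hasStrictFDerivAt_of_hasFDerivAt_of_continuousAt
      (by filter_upwards [hΩ.mem_nhds hx] using hX.hasFDerivAt)
      (hX.continuousOn_deriv.continuousAt (mem_of_superset (hΩ.mem_nhds hx) subset_closure))
    rw [← map_nhds_add_smul_eq hstrict (htA x hx)]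
    exact image_mem_map (hΩ.mem_nhds hx)
  · rintro z ⟨hz, hzΩ⟩
    have himage : IsClosed ((fun x => x + t • X x) '' closure Ω) :=
      (hΩb.isCompact_closure.image_of_continuousOn
        (continuousOn_id.add (hX.continuousOn.const_smul t))).isClosed
    obtain ⟨y, hy, rfl⟩ := closure_minimal (image_mono subset_closure) himage hz
    refine ⟨y, by_contra fun hyΩ => hbdry y ?_ hzΩ, rfl⟩
    rw [hΩ.frontier_eq]
    exact ⟨hy, hyΩ⟩

variable [InnerProductSpace ℝ E] [FiniteDimensional ℝ E]
  [MeasurableSpace E] [BorelSpace E] {Ω : Set E} {X : E → E} {A : E → E →L[ℝ] E}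

lemma HasFDerivUpToBoundary.integrableOn_abs_det_id_add_smul (hX : HasFDerivUpToBoundary Ω X A)
    (hΩb : IsBounded Ω) (t : ℝ) :
    IntegrableOn (fun x => |(ContinuousLinearMap.id ℝ E + t • A x).det|) Ω :=
  integrableOn_of_continuousOn_closure hΩb
    (ContinuousLinearMap.continuous_det.abs.comp_continuousOn
      (continuousOn_const.add (hX.continuousOn_deriv.const_smul t)))

lemma HasFDerivUpToBoundary.volume_real_le_setIntegral_abs_det (hX : HasFDerivUpToBoundary Ω X A)
    (hΩ : IsOpen Ω) (hΩb : IsBounded Ω) {t : ℝ} (hcover : Ω ⊆ (fun x => x + t • X x) '' Ω) :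
    volume.real Ω ≤ ∫ x in Ω, |(ContinuousLinearMap.id ℝ E + t • A x).det| := by
  have hvolume : volume Ω ≤
      ENNReal.ofReal (∫ x in Ω, |(ContinuousLinearMap.id ℝ E + t • A x).det|) := by
    rw [ofReal_integral_eq_lintegral_ofReal (hX.integrableOn_abs_det_id_add_smul hΩb t)
      (.of_forall fun x => abs_nonneg _)]
    exact (measure_mono hcover).trans <|
      addHaar_image_le_lintegral_abs_det_fderiv volume hΩ.measurableSet fun x hx =>
        ((hasFDerivAt_id x).add ((hX.hasFDerivAt x hx).const_smul t)).hasFDerivWithinAt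
  exact ENNReal.toReal_le_of_le_ofReal (integral_nonneg fun x => abs_nonneg _) hvolume

lemma HasFDerivUpToBoundary.eventually_volume_real_le_setIntegral_abs_det
    (hX : HasFDerivUpToBoundary Ω X A) (hΩ : IsOpen Ω) (hΩb : IsBounded Ω) (hconn : IsConnected Ω)
    (hbdry : ∀ y ∈ frontier Ω, ∀ t : ℝ, 0 ≤ t → y + t • X y ∉ Ω) :
    ∀ᶠ t in 𝓝[>] (0 : ℝ),
      volume.real Ω ≤ ∫ x in Ω, |(ContinuousLinearMap.id ℝ E + t • A x).det| := by
  obtain ⟨M, hM⟩ := hΩb.isCompact_closure.exists_bound_of_continuousOn hX.continuousOn_deriv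
  obtain ⟨x₀, hx₀⟩ := hconn.nonempty
  have hmeet : ∀ᶠ t in 𝓝[>] (0 : ℝ), x₀ + t • X x₀ ∈ Ω :=
    nhdsWithin_le_nhds (ContinuousAt.eventually_mem (by fun_prop)
      (hΩ.mem_nhds (by simpa using hx₀)))
  filter_upwards [self_mem_nhdsWithin, eventually_mul_lt_one_nhdsGT M, hmeet] with t ht htM htx₀
  refine hX.volume_real_le_setIntegral_abs_det hΩ hΩb
    (hX.subset_image_add_smul hΩ hΩb hconn.isPreconnected (fun x hx => ?_) ⟨x₀, hx₀, htx₀⟩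
      fun y hy => hbdry y hy t (le_of_lt ht))
  rw [norm_smul, Real.norm_of_nonneg (le_of_lt ht)]
  exact (mul_le_mul_of_nonneg_left (hM x (subset_closure hx)) (le_of_lt ht)).trans_lt htM

lemma HasFDerivUpToBoundary.exists_forall_setIntegral_abs_det_le
    (hX : HasFDerivUpToBoundary Ω X A) (hΩ : IsOpen Ω) (hΩb : IsBounded Ω)
    (hA : ∀ x ∈ Ω, (A x : E →ₗ[ℝ] E).IsSymmetric) :
    ∃ C, ∀ᶠ t in 𝓝[>] (0 : ℝ), ∫ x in Ω, |(ContinuousLinearMap.id ℝ E + t • A x).det| ≤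
      volume.real Ω + t * (∫ x in Ω, traceCLM (A x)) + t ^ 2 / 2 *
        ((∫ x in Ω, traceCLM (A x) ^ 2) - ∫ x in Ω, traceCLM (A x ∘L A x)) + C * t ^ 3 := by
  obtain ⟨M, hM⟩ := hΩb.isCompact_closure.exists_bound_of_continuousOn hX.continuousOn_deriv
  obtain ⟨C, hC⟩ := exists_forall_abs_det_id_add_smul_le (E := E) M
  refine ⟨volume.real Ω * C, ?_⟩
  have hAc := hX.continuousOn_deriv
  have htr : ContinuousOn (fun x => traceCLM (A x)) (closure Ω) :=
    traceCLM.continuous.comp_continuousOn hAc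
  have htr_int : IntegrableOn (fun x => traceCLM (A x)) Ω :=
    integrableOn_of_continuousOn_closure hΩb htr
  have htr_sq_int : IntegrableOn (fun x => traceCLM (A x) ^ 2) Ω :=
    integrableOn_of_continuousOn_closure hΩb (htr.pow 2)
  have hcomp_int : IntegrableOn (fun x => traceCLM (A x ∘L A x)) Ω :=
    integrableOn_of_continuousOn_closure hΩb
      (traceCLM.continuous.comp_continuousOn (hAc.clm_comp hAc))
  have hconst_int : ∀ c : ℝ, IntegrableOn (fun _ : E => c) Ω := fun c =>
    integrableOn_const hΩb.measure_lt_top.ne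
  filter_upwards [self_mem_nhdsWithin, eventually_mul_lt_one_nhdsGT M] with t ht htM
  have hlin_int : IntegrableOn (fun x => 1 + t * traceCLM (A x)) Ω :=
    (hconst_int 1).add (htr_int.const_mul t)
  have hquad_int : IntegrableOn
      (fun x => t ^ 2 / 2 * (traceCLM (A x) ^ 2 - traceCLM (A x ∘L A x))) Ω :=
    (htr_sq_int.sub hcomp_int).const_mul _
  have hsum_int : IntegrableOn (fun x => 1 + t * traceCLM (A x) +
      t ^ 2 / 2 * (traceCLM (A x) ^ 2 - traceCLM (A x ∘L A x))) Ω := hlin_int.add hquad_int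
  calc ∫ x in Ω, |(ContinuousLinearMap.id ℝ E + t • A x).det|
      ≤ ∫ x in Ω, (1 + t * traceCLM (A x) +
          t ^ 2 / 2 * (traceCLM (A x) ^ 2 - traceCLM (A x ∘L A x)) + C * t ^ 3) :=
        setIntegral_mono_on (hX.integrableOn_abs_det_id_add_smul hΩb t)
          (hsum_int.add (hconst_int _))
          hΩ.measurableSet fun x hx =>
            hC (A x) t (hA x hx) (hM x (subset_closure hx)) (le_of_lt ht) htM.le
    _ = _ := by
        rw [integral_add hsum_int (hconst_int _), integral_add hlin_int hquad_int,
          integral_add (hconst_int 1) (htr_int.const_mul t), integral_const_mul,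
          integral_const_mul, integral_sub htr_sq_int hcomp_int, setIntegral_const,
          setIntegral_const, smul_eq_mul, smul_eq_mul, mul_one, mul_assoc]

lemma HasFDerivUpToBoundary.setIntegral_trace_comp_self_le (hX : HasFDerivUpToBoundary Ω X A)
    (hΩ : IsOpen Ω) (hΩb : IsBounded Ω) (hconn : IsConnected Ω)
    (hA : ∀ x ∈ Ω, (A x : E →ₗ[ℝ] E).IsSymmetric) (hdiv : ∫ x in Ω, traceCLM (A x) = 0)
    (hbdry : ∀ y ∈ frontier Ω, ∀ t : ℝ, 0 ≤ t → y + t • X y ∉ Ω) :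
    ∫ x in Ω, traceCLM (A x ∘L A x) ≤ ∫ x in Ω, traceCLM (A x) ^ 2 := by
  obtain ⟨C, hC⟩ := hX.exists_forall_setIntegral_abs_det_le hΩ hΩb hA
  have hlim : Tendsto (fun t => 2 * C * t) (𝓝[>] (0 : ℝ)) (𝓝 0) :=
    ((continuous_const_mul (2 * C)).tendsto' 0 0 (mul_zero _)).mono_left nhdsWithin_le_nhds
  rw [← sub_nonpos]
  refine ge_of_tendsto hlim ?_
  filter_upwards [self_mem_nhdsWithin, hC,
    hX.eventually_volume_real_le_setIntegral_abs_det hΩ hΩb hconn hbdry] with t ht hupper hlower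
  have ht_pos : 0 < t := ht
  rw [hdiv] at hupper
  refine le_of_mul_le_mul_left ?_ (pow_pos ht_pos 2)
  linarith

end VolumeExpansion

section SmoothNorm

variable {E : Type*} [NormedAddCommGroup E] {ε : ℝ}

/-- The regularization `√(‖v‖² + ε²)` of the norm, which is smooth also at the origin. -/
noncomputable def smoothNorm (ε : ℝ) (v : E) : ℝ := √(‖v‖ ^ 2 + ε ^ 2)

lemma smoothNorm_pos (hε : ε ≠ 0) (v : E) : 0 < smoothNorm ε v := Real.sqrt_pos.2 (by positivity)

lemma smoothNorm_sq (ε : ℝ) (v : E) : smoothNorm ε v ^ 2 = ‖v‖ ^ 2 + ε ^ 2 :=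
  Real.sq_sqrt (by positivity)

lemma norm_le_smoothNorm (ε : ℝ) (v : E) : ‖v‖ ≤ smoothNorm ε v :=
  Real.le_sqrt_of_sq_le (by linarith [sq_nonneg ε])

lemma le_smoothNorm (ε : ℝ) (v : E) : ε ≤ smoothNorm ε v :=
  Real.le_sqrt_of_sq_le (by linarith [sq_nonneg ‖v‖])

lemma norm_le_sq_div_smoothNorm_add (hε : 0 < ε) (v : E) :
    ‖v‖ ≤ ‖v‖ ^ 2 / smoothNorm ε v + ε := by
  have hpos := smoothNorm_pos hε.ne' v
  have hsq := smoothNorm_sq ε v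
  rw [← sub_le_iff_le_add, le_div_iff₀ hpos]
  nlinarith [norm_le_smoothNorm ε v, le_smoothNorm ε v]

lemma continuous_smoothNorm (ε : ℝ) : Continuous (smoothNorm ε : E → ℝ) := by
  unfold smoothNorm
  fun_prop

variable [InnerProductSpace ℝ E]

/-- The gradient `v / √(‖v‖² + ε²)` of `smoothNorm ε`, a regularization of the direction of `v`. -/
noncomputable def smoothDir (ε : ℝ) (v : E) : E := (smoothNorm ε v)⁻¹ • v

lemma norm_smoothDir_le_one (ε : ℝ) (v : E) : ‖smoothDir ε v‖ ≤ 1 := by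
  have hnonneg : 0 ≤ smoothNorm ε v := Real.sqrt_nonneg _
  rw [smoothDir, norm_smul, norm_inv, Real.norm_of_nonneg hnonneg, inv_mul_eq_div]
  exact div_le_one_of_le₀ (norm_le_smoothNorm ε v) hnonneg

lemma smoothDir_zero (ε : ℝ) : smoothDir ε (0 : E) = 0 := smul_zero _

lemma smoothNorm_smul_smoothDir (hε : ε ≠ 0) (v : E) : smoothNorm ε v • smoothDir ε v = v :=
  smul_inv_smul₀ (smoothNorm_pos hε v).ne' v

lemma continuous_smoothDir (hε : ε ≠ 0) : Continuous (smoothDir ε : E → E) :=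
  ((continuous_smoothNorm ε).inv₀ fun v => (smoothNorm_pos hε v).ne').smul continuous_id

lemma hasFDerivAt_smoothNorm (hε : ε ≠ 0) (v : E) :
    HasFDerivAt (smoothNorm ε) (innerSL ℝ (smoothDir ε v)) v := by
  have hsq_ne : ‖v‖ ^ 2 + ε ^ 2 ≠ 0 := by positivity
  refine (((hasStrictFDerivAt_norm_sq v).hasFDerivAt.add_const (ε ^ 2)).sqrt hsq_ne).congr_fderiv ?_
  ext w
  simp only [smoothDir, smoothNorm, smul_apply, innerSL_apply_apply, real_inner_smul_left,
    smul_eq_mul, nsmul_eq_mul, Nat.cast_ofNat]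
  field_simp

variable {Ω : Set E} {X : E → E} {A : E → E →L[ℝ] E}

lemma HasFDerivUpToBoundary.smoothNorm_comp (hX : HasFDerivUpToBoundary Ω X A) (hε : ε ≠ 0) :
    HasFDerivUpToBoundary Ω (fun x => smoothNorm ε (X x))
      (fun x => (innerSL ℝ (smoothDir ε (X x))).comp (A x)) :=
  hX.comp (hasFDerivAt_smoothNorm hε) ((innerSL ℝ).continuous.comp (continuous_smoothDir hε))

lemma HasFDerivUpToBoundary.inv {f : E → ℝ} {f' : E → E →L[ℝ] ℝ}
    (hf : HasFDerivUpToBoundary Ω f f') (hne : ∀ x ∈ closure Ω, f x ≠ 0) :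
    HasFDerivUpToBoundary Ω (fun x => (f x)⁻¹) (fun x => -(f x ^ 2)⁻¹ • f' x) where
  continuousOn := hf.continuousOn.inv₀ hne
  continuousOn_deriv := (((hf.continuousOn.pow 2).inv₀ fun x hx =>
    pow_ne_zero 2 (hne x hx)).neg).smul hf.continuousOn_deriv
  hasFDerivAt x hx :=
    (hasDerivAt_inv (hne x (subset_closure hx))).comp_hasFDerivAt x (hf.hasFDerivAt x hx)

end SmoothNorm

section VanishingQuotient

variable {α : Type*} [MeasurableSpace α] {μ : Measure α} {r : α → ℝ}

lemma integral_mul_le_sqrt_mul_sqrt_of_nonneg {f g : α → ℝ} (hf_nonneg : ∀ x, 0 ≤ f x)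
    (hg_nonneg : ∀ x, 0 ≤ g x) (hf : MemLp f 2 μ) (hg : MemLp g 2 μ) :
    ∫ x, f x * g x ∂μ ≤ √(∫ x, f x ^ 2 ∂μ) * √(∫ x, g x ^ 2 ∂μ) := by
  simpa [Real.sqrt_eq_rpow] using integral_mul_le_Lp_mul_Lq_of_nonneg
    Real.HolderConjugate.two_two (.of_forall hf_nonneg) (.of_forall hg_nonneg)
    (by simpa using hf) (by simpa using hg)

lemma tendsto_setIntegral_sq_div_add_sq [IsFiniteMeasure μ] (hr : AEMeasurable r μ) :
    Tendsto (fun ε => ∫ x in {x | r x ≠ 0}, ε ^ 2 / (r x ^ 2 + ε ^ 2) ∂μ) (𝓝 0) (𝓝 0) := by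
  have hlim := tendsto_integral_filter_of_dominated_convergence (l := 𝓝 0)
    (μ := μ.restrict {x | r x ≠ 0}) (F := fun ε x => ε ^ 2 / (r x ^ 2 + ε ^ 2)) (f := 0)
    (fun _ => (1 : ℝ)) (.of_forall fun ε => ?_) (.of_forall fun ε => .of_forall fun x => ?_)
    (integrable_const 1) ?_
  · simpa using hlim
  · exact (aemeasurable_const.div ((hr.restrict.pow_const 2).add_const _)).aestronglyMeasurable
  · rw [Real.norm_of_nonneg (by positivity)]
    exact div_le_one_of_le₀ (by linarith [sq_nonneg (r x)]) (by positivity)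
  · have hr_ne : NullMeasurableSet {x | r x ≠ 0} μ :=
      hr.nullMeasurableSet_preimage (measurableSet_singleton 0).compl
    filter_upwards [ae_restrict_mem₀ hr_ne] with x hx
    have hcont : ContinuousAt (fun ε : ℝ => ε ^ 2 / (r x ^ 2 + ε ^ 2)) 0 :=
      ContinuousAt.div (by fun_prop) (by fun_prop) (by simpa using hx)
    simpa using hcont.tendsto

variable {T : ℝ → α → ℝ} {T₀ : α → ℝ} {C : ℝ}

lemma ae_eq_zero_of_forall_integral_sq_le (hr : AEMeasurable r μ)
    (hT : ∀ ε, 0 < ε → MemLp (T ε) 2 μ) (hTr : ∀ ε, 0 < ε → ∀ x, r x = 0 → T ε x = T₀ x)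
    (hTC : ∀ ε, 0 < ε → ∫ x, T ε x ^ 2 ∂μ ≤ C * ε ^ 2) :
    ∀ᵐ x ∂μ, r x = 0 → T₀ x = 0 := by
  have hr_eq : NullMeasurableSet {x | r x = 0} μ :=
    hr.nullMeasurableSet_preimage (measurableSet_singleton 0)
  have hcongr : ∀ ε, 0 < ε → (fun x => T ε x ^ 2) =ᵐ[μ.restrict {x | r x = 0}]
      fun x => T₀ x ^ 2 := fun ε hε => by
    filter_upwards [ae_restrict_mem₀ hr_eq] with x hx
    rw [hTr ε hε x hx]
  have hle : ∀ ε, 0 < ε → ∫ x in {x | r x = 0}, T₀ x ^ 2 ∂μ ≤ C * ε ^ 2 := fun ε hε => by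
    rw [← integral_congr_ae (hcongr ε hε)]
    exact (setIntegral_le_integral (hT ε hε).integrable_sq
      (.of_forall fun x => sq_nonneg _)).trans (hTC ε hε)
  have hlim : Tendsto (fun ε => C * ε ^ 2) (𝓝[>] (0 : ℝ)) (𝓝 0) :=
    (Continuous.tendsto' (by fun_prop) 0 0 (by simp)).mono_left nhdsWithin_le_nhds
  have hzero : ∫ x in {x | r x = 0}, T₀ x ^ 2 ∂μ = 0 :=
    (ge_of_tendsto hlim (eventually_mem_nhdsWithin.mono hle)).antisymm
      (integral_nonneg fun x => sq_nonneg _)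
  rw [integral_eq_zero_iff_of_nonneg (fun x => sq_nonneg _)
    ((hT 1 one_pos).integrable_sq.restrict.congr (hcongr 1 one_pos)), EventuallyEq,
    ae_restrict_iff'₀ hr_eq] at hzero
  exact hzero.mono fun x hx hrx => pow_eq_zero_iff two_ne_zero |>.1 (hx hrx)

lemma tendsto_integral_abs_div_sqrt [IsFiniteMeasure μ] (hr : AEMeasurable r μ)
    (hT : ∀ ε, 0 < ε → MemLp (T ε) 2 μ) (hTr : ∀ ε, 0 < ε → ∀ x, r x = 0 → T ε x = T₀ x)
    (hTC : ∀ ε, 0 < ε → ∫ x, T ε x ^ 2 ∂μ ≤ C * ε ^ 2) :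
    Tendsto (fun ε => ∫ x, |T ε x| / √(r x ^ 2 + ε ^ 2) ∂μ) (𝓝[>] 0) (𝓝 0) := by
  set S : Set α := {x | r x ≠ 0}
  have hlim : Tendsto (fun ε => √(C * ∫ x in S, ε ^ 2 / (r x ^ 2 + ε ^ 2) ∂μ)) (𝓝[>] 0) (𝓝 0) := by
    simpa using (((tendsto_setIntegral_sq_div_add_sq hr).mono_left nhdsWithin_le_nhds).const_mul
      C).sqrt
  refine tendsto_of_tendsto_of_tendsto_of_le_of_le' tendsto_const_nhds hlim
    (.of_forall fun ε => integral_nonneg fun x => by positivity) ?_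
  filter_upwards [self_mem_nhdsWithin] with ε hε
  have hε_pos : 0 < ε := hε
  have hweight : MemLp (fun x => (√(r x ^ 2 + ε ^ 2))⁻¹) 2 (μ.restrict S) := by
    refine .of_bound ((hr.restrict.pow_const 2).add_const _).sqrt.inv.aestronglyMeasurable ε⁻¹
      (.of_forall fun x => ?_)
    rw [Real.norm_of_nonneg (by positivity)]
    exact inv_anti₀ hε_pos (Real.le_sqrt_of_sq_le (by linarith [sq_nonneg (r x)]))
  have hvanish : ∀ᵐ x ∂μ, x ∉ S → |T ε x| / √(r x ^ 2 + ε ^ 2) = 0 := by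
    filter_upwards [ae_eq_zero_of_forall_integral_sq_le hr hT hTr hTC] with x hx hxS
    rw [hTr ε hε x (not_not.1 hxS), hx (not_not.1 hxS), abs_zero, zero_div]
  calc ∫ x, |T ε x| / √(r x ^ 2 + ε ^ 2) ∂μ
      = ∫ x in S, |T ε x| * (√(r x ^ 2 + ε ^ 2))⁻¹ ∂μ :=
        (setIntegral_eq_integral_of_ae_compl_eq_zero hvanish).symm
    _ ≤ √(∫ x in S, |T ε x| ^ 2 ∂μ) * √(∫ x in S, (√(r x ^ 2 + ε ^ 2))⁻¹ ^ 2 ∂μ) :=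
        integral_mul_le_sqrt_mul_sqrt_of_nonneg (fun x => abs_nonneg _) (fun x => by positivity)
          ((hT ε hε).abs.restrict S) hweight
    _ ≤ √(C * ε ^ 2) * √(∫ x in S, (√(r x ^ 2 + ε ^ 2))⁻¹ ^ 2 ∂μ) := by
        gcongr
        simp only [sq_abs]
        exact (setIntegral_le_integral (hT ε hε).integrable_sq
          (.of_forall fun x => sq_nonneg _)).trans (hTC ε hε)
    _ = √(C * ∫ x in S, ε ^ 2 / (r x ^ 2 + ε ^ 2) ∂μ) := by
        rw [← Real.sqrt_mul' _ (integral_nonneg fun x => by positivity), mul_assoc,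
          ← integral_const_mul]
        refine congrArg (fun I => √(C * I)) (integral_congr_ae (.of_forall fun x => ?_))
        simp only [inv_pow, Real.sq_sqrt (add_nonneg (sq_nonneg (r x)) (sq_nonneg ε)),
          div_eq_mul_inv]

end VanishingQuotient

section Rigidity

variable {E : Type*} [NormedAddCommGroup E] [InnerProductSpace ℝ E]
  {Ω : Set E} {X : E → E} {A : E → E →L[ℝ] E} {u h c : E → ℝ} {ε : ℝ}

lemma innerSL_comp_eq_innerSL_apply_of_isSymmetric {T : E →L[ℝ] E}
    (hT : (T : E →ₗ[ℝ] E).IsSymmetric) (v : E) :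
    (innerSL ℝ v).comp T = innerSL ℝ (T v) := by
  ext w
  exact (hT v w).symm

lemma HasFDerivUpToBoundary.continuousOn_smoothDir (hX : HasFDerivUpToBoundary Ω X A)
    (hε : ε ≠ 0) : ContinuousOn (fun x => smoothDir ε (X x)) (closure Ω) :=
  (continuous_smoothDir hε).comp_continuousOn hX.continuousOn

lemma HasFDerivUpToBoundary.continuousOn_div_smoothNorm {g : E → ℝ}
    (hX : HasFDerivUpToBoundary Ω X A) (hg : ContinuousOn g (closure Ω)) (hε : ε ≠ 0) :
    ContinuousOn (fun x => g x / smoothNorm ε (X x)) (closure Ω) :=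
  hg.div ((continuous_smoothNorm ε).comp_continuousOn hX.continuousOn) fun x _ =>
    (smoothNorm_pos hε (X x)).ne'

lemma HasFDerivUpToBoundary.exists_mul_inv_smoothNorm
    (hu : HasFDerivUpToBoundary Ω u (fun x => innerSL ℝ (X x))) (hX : HasFDerivUpToBoundary Ω X A)
    (hε : ε ≠ 0) :
    ∃ φ' : E → E →L[ℝ] ℝ, HasFDerivUpToBoundary Ω (fun x => u x * (smoothNorm ε (X x))⁻¹) φ' ∧
      ∀ x, φ' x (X x) = ‖X x‖ ^ 2 / smoothNorm ε (X x) -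
        u x / smoothNorm ε (X x) * ⟪A x (smoothDir ε (X x)), smoothDir ε (X x)⟫ := by
  refine ⟨_, hu.mul ((hX.smoothNorm_comp hε).inv fun x _ => (smoothNorm_pos hε (X x)).ne'),
    fun x => ?_⟩
  have hρ := (smoothNorm_pos hε (X x)).ne'
  have hAX : A x (X x) = smoothNorm ε (X x) • A x (smoothDir ε (X x)) := by
    rw [← map_smul, smoothNorm_smul_smoothDir hε]
  simp only [add_apply, smul_apply, ContinuousLinearMap.comp_apply, innerSL_apply_apply,
    smul_eq_mul, hAX, inner_smul_right, real_inner_self_eq_norm_sq,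
    real_inner_comm (A x (smoothDir ε (X x)))]
  field_simp
  ring

variable [FiniteDimensional ℝ E]

lemma HasFDerivUpToBoundary.continuousOn_transverseTrace (hX : HasFDerivUpToBoundary Ω X A)
    (hε : ε ≠ 0) :
    ContinuousOn (fun x => transverseTrace (A x) (smoothDir ε (X x))) (closure Ω) :=
  (traceCLM.continuous.comp_continuousOn hX.continuousOn_deriv).sub
    ((hX.continuousOn_deriv.clm_apply (hX.continuousOn_smoothDir hε)).inner
      (hX.continuousOn_smoothDir hε))

variable [MeasurableSpace E] [BorelSpace E]

lemma IsWeakNeumannField.setIntegral_trace_eq_zero (hXh : IsWeakNeumannField Ω X h)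
    (hΩ : IsOpen Ω) (hΩb : IsBounded Ω) (hX : HasFDerivUpToBoundary Ω X A)
    (hh : ContinuousOn h (closure Ω)) : ∫ x in Ω, traceCLM (A x) = 0 := by
  have htest := hXh (fun _ => 1) contDiff_const
  simp only [fderiv_fun_const, Pi.zero_apply, zero_apply, integral_zero, mul_one] at htest
  rw [setIntegral_congr_fun hΩ.measurableSet (hXh.trace_eq_neg hΩ hΩb hX hh), integral_neg, ← htest,
    neg_zero]

lemma IsWeakNeumannField.setIntegral_trace_comp_self_le (hXh : IsWeakNeumannField Ω X h)
    (hΩ : IsOpen Ω) (hΩb : IsBounded Ω) (hconv : Convex ℝ Ω) (hne : Ω.Nonempty)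
    (hX : HasFDerivUpToBoundary Ω X A) (hA : ∀ x ∈ Ω, (A x : E →ₗ[ℝ] E).IsSymmetric)
    (hh : ContinuousOn h (closure Ω)) :
    ∫ x in Ω, traceCLM (A x ∘L A x) ≤ ∫ x in Ω, h x ^ 2 := by
  refine (hX.setIntegral_trace_comp_self_le hΩ hΩb (hconv.isConnected hne) hA
    (hXh.setIntegral_trace_eq_zero hΩ hΩb hX hh) fun y hy t ht =>
      hXh.add_smul_notMem hΩ hΩb hconv hX.continuousOn hh hy ht).trans_eq ?_
  refine setIntegral_congr_fun hΩ.measurableSet fun x hx => ?_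
  rw [hXh.trace_eq_neg hΩ hΩb hX hh x hx, neg_sq]

lemma IsWeakNeumannField.setIntegral_deriv_mul_norm_sq_eq {f : ℝ → ℝ} (hf : ContDiff ℝ 1 f)
    (hXu : IsWeakNeumannField Ω X (fun x => f (u x))) (hΩ : IsOpen Ω) (hΩb : IsBounded Ω)
    (hconv : Convex ℝ Ω) (hne : Ω.Nonempty)
    (hu : HasFDerivUpToBoundary Ω u (fun x => innerSL ℝ (X x))) (hX : ContinuousOn X (closure Ω)) :
    ∫ x in Ω, deriv f (u x) * ‖X x‖ ^ 2 = ∫ x in Ω, f (u x) ^ 2 := by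
  have hfu := hu.comp (fun s => (hf.differentiable one_ne_zero s).hasFDerivAt)
    (hf.continuous_fderiv one_ne_zero)
  have htest := hXu.setIntegral_eq hΩ hΩb hconv hne hX hfu.continuousOn hfu
  simpa [fderiv_eq_smul_deriv, real_inner_self_eq_norm_sq, mul_comm, sq] using htest

lemma IsStablePotential.setIntegral_mul_norm_sq_add_le (hc : IsStablePotential Ω c)
    (hΩ : IsOpen Ω) (hΩb : IsBounded Ω) (hconv : Convex ℝ Ω) (hne : Ω.Nonempty)
    (hc_cont : ContinuousOn c (closure Ω)) (hX : HasFDerivUpToBoundary Ω X A)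
    (hA : ∀ x ∈ Ω, (A x : E →ₗ[ℝ] E).IsSymmetric) (hε : ε ≠ 0) :
    (∫ x in Ω, c x * ‖X x‖ ^ 2) + ε ^ 2 * ∫ x in Ω, c x ≤
      ∫ x in Ω, ‖A x (smoothDir ε (X x))‖ ^ 2 := by
  have hcX_int : IntegrableOn (fun x => c x * ‖X x‖ ^ 2) Ω :=
    integrableOn_of_continuousOn_closure hΩb (hc_cont.mul (hX.continuousOn.norm.pow 2))
  calc (∫ x in Ω, c x * ‖X x‖ ^ 2) + ε ^ 2 * ∫ x in Ω, c x
      = ∫ x in Ω, c x * smoothNorm ε (X x) ^ 2 := by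
        rw [← integral_const_mul, ← integral_add hcX_int
          ((integrableOn_of_continuousOn_closure hΩb hc_cont).const_mul _)]
        refine integral_congr_ae (.of_forall fun x => ?_)
        simp only [smoothNorm_sq]
        ring
    _ ≤ ∫ x in Ω, ‖(innerSL ℝ (smoothDir ε (X x))).comp (A x)‖ ^ 2 :=
        hc.setIntegral_le hΩ hΩb hconv hne hc_cont (hX.smoothNorm_comp hε)
    _ = ∫ x in Ω, ‖A x (smoothDir ε (X x))‖ ^ 2 :=
        setIntegral_congr_fun hΩ.measurableSet fun x hx => by
          simp only [innerSL_comp_eq_innerSL_apply_of_isSymmetric (hA x hx), innerSL_apply_norm]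

lemma IsStablePotential.setIntegral_transverseTrace_sq_le (hc : IsStablePotential Ω c)
    (hΩ : IsOpen Ω) (hΩb : IsBounded Ω) (hconv : Convex ℝ Ω) (hne : Ω.Nonempty)
    (hc_cont : ContinuousOn c (closure Ω)) (hX : HasFDerivUpToBoundary Ω X A)
    (hA : ∀ x ∈ Ω, (A x : E →ₗ[ℝ] E).IsSymmetric)
    (hAc : ∫ x in Ω, traceCLM (A x ∘L A x) ≤ ∫ x in Ω, c x * ‖X x‖ ^ 2) (hε : ε ≠ 0) :
    ∫ x in Ω, transverseTrace (A x) (smoothDir ε (X x)) ^ 2 ≤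
      (-Module.finrank ℝ E * ∫ x in Ω, c x) * ε ^ 2 := by
  have hA_cont := hX.continuousOn_deriv
  have hAm_int : IntegrableOn (fun x => ‖A x (smoothDir ε (X x))‖ ^ 2) Ω :=
    integrableOn_of_continuousOn_closure hΩb
      ((hA_cont.clm_apply (hX.continuousOn_smoothDir hε)).norm.pow 2)
  have hAA_int : IntegrableOn (fun x => traceCLM (A x ∘L A x)) Ω :=
    integrableOn_of_continuousOn_closure hΩb
      (traceCLM.continuous.comp_continuousOn (hA_cont.clm_comp hA_cont))
  have hdiff_int : IntegrableOn (fun x => Module.finrank ℝ E *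
      (traceCLM (A x ∘L A x) - ‖A x (smoothDir ε (X x))‖ ^ 2)) Ω :=
    (hAA_int.sub hAm_int).const_mul _
  calc ∫ x in Ω, transverseTrace (A x) (smoothDir ε (X x)) ^ 2
      ≤ ∫ x in Ω, Module.finrank ℝ E *
          (traceCLM (A x ∘L A x) - ‖A x (smoothDir ε (X x))‖ ^ 2) :=
        setIntegral_mono_on (integrableOn_of_continuousOn_closure hΩb
            ((hX.continuousOn_transverseTrace hε).pow 2)) hdiff_int hΩ.measurableSet
          fun x hx => transverseTrace_sq_le (hA x hx) (norm_smoothDir_le_one _ _)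
    _ = Module.finrank ℝ E * ((∫ x in Ω, traceCLM (A x ∘L A x)) -
          ∫ x in Ω, ‖A x (smoothDir ε (X x))‖ ^ 2) := by
        rw [integral_const_mul, integral_sub hAA_int hAm_int]
    _ ≤ Module.finrank ℝ E * (-(ε ^ 2 * ∫ x in Ω, c x)) := by
        have := hc.setIntegral_mul_norm_sq_add_le hΩ hΩb hconv hne hc_cont hX hA hε
        gcongr
        linarith
    _ = (-Module.finrank ℝ E * ∫ x in Ω, c x) * ε ^ 2 := by ring

lemma tendsto_setIntegral_abs_transverseTrace_div (hΩ : IsOpen Ω) (hΩb : IsBounded Ω)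
    (hX : HasFDerivUpToBoundary Ω X A) {C : ℝ}
    (hT : ∀ ε, 0 < ε → ∫ x in Ω, transverseTrace (A x) (smoothDir ε (X x)) ^ 2 ≤ C * ε ^ 2) :
    Tendsto (fun ε => ∫ x in Ω,
      |transverseTrace (A x) (smoothDir ε (X x))| / smoothNorm ε (X x)) (𝓝[>] 0) (𝓝 0) := by
  have : IsFiniteMeasure (volume.restrict Ω) := ⟨by simpa using hΩb.measure_lt_top⟩
  refine tendsto_integral_abs_div_sqrt (T₀ := fun x => transverseTrace (A x) 0)
    ((hX.continuousOn.mono subset_closure).norm.aemeasurable hΩ.measurableSet) (fun ε hε => ?_)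
    (fun ε _ x hx => ?_) hT
  · have hT_cont := hX.continuousOn_transverseTrace hε.ne'
    exact (memLp_two_iff_integrable_sq
      ((hT_cont.mono subset_closure).aestronglyMeasurable hΩ.measurableSet)).2
      (integrableOn_of_continuousOn_closure hΩb (hT_cont.pow 2))
  · rw [norm_eq_zero.1 hx, smoothDir_zero]

lemma IsWeakNeumannField.setIntegral_sq_div_smoothNorm_eq (hXh : IsWeakNeumannField Ω X h)
    (hΩ : IsOpen Ω) (hΩb : IsBounded Ω) (hconv : Convex ℝ Ω) (hne : Ω.Nonempty)
    (hu : HasFDerivUpToBoundary Ω u (fun x => innerSL ℝ (X x))) (hX : HasFDerivUpToBoundary Ω X A)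
    (hh : ContinuousOn h (closure Ω)) (hε : ε ≠ 0) :
    ∫ x in Ω, ‖X x‖ ^ 2 / smoothNorm ε (X x) =
      ∫ x in Ω, -(u x / smoothNorm ε (X x) * transverseTrace (A x) (smoothDir ε (X x))) := by
  obtain ⟨φ', hφ, hφX⟩ := hu.exists_mul_inv_smoothNorm hX hε
  have htest := hXh.setIntegral_eq hΩ hΩb hconv hne hX.continuousOn hh hφ
  have hm_cont := hX.continuousOn_smoothDir hε
  have hX_int : IntegrableOn (fun x => ‖X x‖ ^ 2 / smoothNorm ε (X x)) Ω :=
    integrableOn_of_continuousOn_closure hΩb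
      (hX.continuousOn_div_smoothNorm (hX.continuousOn.norm.pow 2) hε)
  have hQ_int : IntegrableOn (fun x => u x / smoothNorm ε (X x) *
      ⟪A x (smoothDir ε (X x)), smoothDir ε (X x)⟫) Ω :=
    integrableOn_of_continuousOn_closure hΩb
      ((hX.continuousOn_div_smoothNorm hu.continuousOn hε).mul
        ((hX.continuousOn_deriv.clm_apply hm_cont).inner hm_cont))
  have hT_int : IntegrableOn (fun x => -(u x / smoothNorm ε (X x) *
      transverseTrace (A x) (smoothDir ε (X x)))) Ω :=
    integrableOn_of_continuousOn_closure hΩb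
      ((hX.continuousOn_div_smoothNorm hu.continuousOn hε).mul
        (hX.continuousOn_transverseTrace hε)).neg
  have hright : ∀ x ∈ Ω, h x * (u x * (smoothNorm ε (X x))⁻¹) =
      -(u x / smoothNorm ε (X x) * transverseTrace (A x) (smoothDir ε (X x))) -
        u x / smoothNorm ε (X x) * ⟪A x (smoothDir ε (X x)), smoothDir ε (X x)⟫ := fun x hx => by
    rw [transverseTrace, hXh.trace_eq_neg hΩ hΩb hX hh x hx]
    ring
  simp only [hφX] at htest
  rw [setIntegral_congr_fun hΩ.measurableSet hright, integral_sub hT_int hQ_int,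
    integral_sub hX_int hQ_int] at htest
  exact sub_left_injective htest

lemma IsWeakNeumannField.setIntegral_norm_le (hXh : IsWeakNeumannField Ω X h)
    (hΩ : IsOpen Ω) (hΩb : IsBounded Ω) (hconv : Convex ℝ Ω) (hne : Ω.Nonempty)
    (hu : HasFDerivUpToBoundary Ω u (fun x => innerSL ℝ (X x))) (hX : HasFDerivUpToBoundary Ω X A)
    (hh : ContinuousOn h (closure Ω)) (hε : 0 < ε) {K : ℝ} (hK : ∀ x ∈ Ω, |u x| ≤ K) :
    ∫ x in Ω, ‖X x‖ ≤ K * (∫ x in Ω,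
      |transverseTrace (A x) (smoothDir ε (X x))| / smoothNorm ε (X x)) + ε * volume.real Ω := by
  have hT_cont := hX.continuousOn_transverseTrace hε.ne'
  have hX_int : IntegrableOn (fun x => ‖X x‖ ^ 2 / smoothNorm ε (X x)) Ω :=
    integrableOn_of_continuousOn_closure hΩb
      (hX.continuousOn_div_smoothNorm (hX.continuousOn.norm.pow 2) hε.ne')
  have hε_int : IntegrableOn (fun _ => ε) Ω :=
    integrableOn_of_continuousOn_closure hΩb continuousOn_const
  calc ∫ x in Ω, ‖X x‖
      ≤ ∫ x in Ω, (‖X x‖ ^ 2 / smoothNorm ε (X x) + ε) :=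
        setIntegral_mono (integrableOn_of_continuousOn_closure hΩb hX.continuousOn.norm)
          (hX_int.add hε_int) fun x => norm_le_sq_div_smoothNorm_add hε (X x)
    _ = (∫ x in Ω,
          -(u x / smoothNorm ε (X x) * transverseTrace (A x) (smoothDir ε (X x)))) +
        ε * volume.real Ω := by
        rw [integral_add hX_int hε_int, setIntegral_const, smul_eq_mul, mul_comm (volume.real Ω),
          hXh.setIntegral_sq_div_smoothNorm_eq hΩ hΩb hconv hne hu hX hh hε.ne']
    _ ≤ (∫ x in Ω, K * (|transverseTrace (A x) (smoothDir ε (X x))| / smoothNorm ε (X x))) +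
        ε * volume.real Ω := by
        gcongr ?_ + _
        refine setIntegral_mono_on (integrableOn_of_continuousOn_closure hΩb
          ((hX.continuousOn_div_smoothNorm hu.continuousOn hε.ne').mul hT_cont).neg)
          (integrableOn_of_continuousOn_closure hΩb (continuousOn_const.mul
            (hX.continuousOn_div_smoothNorm hT_cont.abs hε.ne'))) hΩ.measurableSet fun x hx => ?_
        have hρ := smoothNorm_pos hε.ne' (X x)
        refine (neg_le_abs _).trans ?_
        rw [abs_mul, abs_div, abs_of_pos hρ, div_mul_eq_mul_div, mul_div_assoc]
        have := hK x hx
        gcongr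
    _ = _ := by rw [integral_const_mul]

theorem eqOn_zero_of_isWeakNeumannField_of_isStablePotential {f : ℝ → ℝ} (hf : ContDiff ℝ 1 f)
    (hΩ : IsOpen Ω) (hΩb : IsBounded Ω) (hconv : Convex ℝ Ω) (hne : Ω.Nonempty)
    (hu : HasFDerivUpToBoundary Ω u (fun x => innerSL ℝ (X x))) (hX : HasFDerivUpToBoundary Ω X A)
    (hA : ∀ x ∈ Ω, (A x : E →ₗ[ℝ] E).IsSymmetric)
    (hXu : IsWeakNeumannField Ω X (fun x => f (u x)))
    (hstable : IsStablePotential Ω (fun x => deriv f (u x))) : EqOn X 0 Ω := by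
  have hfu : ContinuousOn (fun x => f (u x)) (closure Ω) :=
    hf.continuous.comp_continuousOn hu.continuousOn
  have hf'u : ContinuousOn (fun x => deriv f (u x)) (closure Ω) :=
    (hf.continuous_deriv le_rfl).comp_continuousOn hu.continuousOn
  have hkadlec : ∫ x in Ω, traceCLM (A x ∘L A x) ≤ ∫ x in Ω, deriv f (u x) * ‖X x‖ ^ 2 :=
    (hXu.setIntegral_trace_comp_self_le hΩ hΩb hconv hne hX hA hfu).trans_eq
      (hXu.setIntegral_deriv_mul_norm_sq_eq hf hΩ hΩb hconv hne hu hX.continuousOn).symm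
  have htrace := tendsto_setIntegral_abs_transverseTrace_div hΩ hΩb hX fun ε hε =>
    hstable.setIntegral_transverseTrace_sq_le hΩ hΩb hconv hne hf'u hX hA hkadlec hε.ne'
  obtain ⟨K, hK⟩ := hΩb.isCompact_closure.exists_bound_of_continuousOn hu.continuousOn
  have hle : ∫ x in Ω, ‖X x‖ ≤ K * 0 + 0 * volume.real Ω :=
    ge_of_tendsto ((htrace.const_mul K).add
      ((tendsto_nhdsWithin_of_tendsto_nhds tendsto_id).mul_const (volume.real Ω))) <| by
        filter_upwards [self_mem_nhdsWithin] with ε hε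
        exact hXu.setIntegral_norm_le hΩ hΩb hconv hne hu hX hfu hε
          fun x hx => hK x (subset_closure hx)
  have hnorm : ∫ x in Ω, ‖X x‖ = 0 :=
    le_antisymm (by simpa using hle) (integral_nonneg fun x => norm_nonneg (X x))
  exact fun x hx => norm_eq_zero.1 (eqOn_zero_of_setIntegral_eq_zero hΩ hΩb hX.continuousOn.norm
    (fun x _ => norm_nonneg (X x)) hnorm hx)

end Rigidity

section Gradient

variable {E : Type*} [NormedAddCommGroup E] [InnerProductSpace ℝ E]
  {s Ω : Set E} {u : E → ℝ}

lemma HasFDerivUpToBoundary.eqOn_const_of_fderiv_eq_zero {u' : E → E →L[ℝ] ℝ}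
    (hu : HasFDerivUpToBoundary Ω u u') (hΩ : IsOpen Ω) (hconv : Convex ℝ Ω)
    (hu' : EqOn u' 0 Ω) {x₀ : E} (hx₀ : x₀ ∈ Ω) : EqOn u (fun _ => u x₀) (closure Ω) := by
  refine EqOn.of_subset_closure (s := Ω) (fun x hx => ?_) hu.continuousOn continuousOn_const
    subset_closure subset_rfl
  refine hconv.is_const_of_fderivWithin_eq_zero (𝕜 := ℝ)
    (fun z hz => (hu.hasFDerivAt z hz).differentiableAt.differentiableWithinAt)
    (fun z hz => ?_) hx hx₀
  rw [fderivWithin_of_isOpen hΩ hz, (hu.hasFDerivAt z hz).fderiv, hu' hz, Pi.zero_apply]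

variable [CompleteSpace E]

lemma innerSL_gradientWithin (u : E → ℝ) (s : Set E) (x : E) :
    innerSL ℝ (gradientWithin u s x) = fderivWithin ℝ u s x := by
  ext v
  simp

lemma gradientWithin_of_isOpen_of_mem_subset (hΩ : IsOpen Ω) (hΩs : Ω ⊆ s) {x : E} (hx : x ∈ Ω) :
    gradientWithin u s x = gradient u x := by
  rw [gradientWithin, gradient, fderivWithin_of_mem_nhds (mem_of_superset (hΩ.mem_nhds hx) hΩs)]

lemma contDiffOn_gradientWithin (hu : ContDiffOn ℝ 2 u s) (hs : UniqueDiffOn ℝ s) :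
    ContDiffOn ℝ 1 (gradientWithin u s) s :=
  (InnerProductSpace.toDual ℝ E).symm.contDiff.comp_contDiffOn (hu.fderivWithin hs le_rfl)

lemma inner_fderivWithin_gradientWithin (hu : ContDiffOn ℝ 2 u s) (hs : UniqueDiffOn ℝ s) {x : E}
    (hx : x ∈ s) (v w : E) : ⟪fderivWithin ℝ (gradientWithin u s) s x v, w⟫ =
      fderivWithin ℝ (fderivWithin ℝ u s) s x v w := by
  have hgrad :=
    ((contDiffOn_gradientWithin hu hs).differentiableOn one_ne_zero x hx).hasFDerivWithinAt
  have hsnd : HasFDerivWithinAt (fun y => innerSL ℝ (gradientWithin u s y))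
      ((innerSL ℝ : E →L[ℝ] E →L[ℝ] ℝ).comp (fderivWithin ℝ (gradientWithin u s) s x)) s x :=
    (innerSL ℝ : E →L[ℝ] E →L[ℝ] ℝ).hasFDerivAt.comp_hasFDerivWithinAt x hgrad
  simp only [innerSL_gradientWithin] at hsnd
  rw [hsnd.fderivWithin (hs x hx)]
  rfl

lemma isSymmetric_fderivWithin_gradientWithin (hu : ContDiffOn ℝ 2 u s) (hs : UniqueDiffOn ℝ s)
    {x : E} (hx : x ∈ interior s) :
    (fderivWithin ℝ (gradientWithin u s) s x : E →ₗ[ℝ] E).IsSymmetric := fun v w => by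
  have hxs := interior_subset hx
  have hsymm : IsSymmSndFDerivWithinAt ℝ u s x :=
    (hu x hxs).isSymmSndFDerivWithinAt (by simp) hs (subset_closure hx) hxs
  rw [ContinuousLinearMap.coe_coe, real_inner_comm _ v, inner_fderivWithin_gradientWithin hu hs hxs,
    inner_fderivWithin_gradientWithin hu hs hxs, hsymm v w]

lemma hasFDerivUpToBoundary_innerSL_gradientWithin (hΩ : IsOpen Ω)
    (hu : ContDiffOn ℝ 1 u (closure Ω)) (huniq : UniqueDiffOn ℝ (closure Ω)) :
    HasFDerivUpToBoundary Ω u (fun x => innerSL ℝ (gradientWithin u (closure Ω) x)) := by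
  simpa only [innerSL_gradientWithin] using hasFDerivUpToBoundary_fderivWithin hΩ hu huniq

end Gradient

theorem stmt_4_general {E : Type*} [NormedAddCommGroup E] [InnerProductSpace ℝ E]
    [FiniteDimensional ℝ E] [MeasurableSpace E] [BorelSpace E] {Ω : Set E} (hΩ : IsOpen Ω)
    (hΩb : IsBounded Ω) (hconv : Convex ℝ Ω) {f : ℝ → ℝ} (hf : ContDiff ℝ 1 f) {u : E → ℝ}
    (hu : ContDiffOn ℝ 2 u (closure Ω))
    (hweak : ∀ φ : E → ℝ, ContDiff ℝ 1 φ →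
      ∫ x in Ω, ⟪gradient u x, gradient φ x⟫ = ∫ x in Ω, f (u x) * φ x)
    (hstable : ∀ φ : E → ℝ, ContDiff ℝ 1 φ →
      ∫ x in Ω, deriv f (u x) * φ x ^ 2 ≤ ∫ x in Ω, ‖gradient φ x‖ ^ 2) :
    ∃ c : ℝ, ∀ x ∈ closure Ω, u x = c := by
  obtain rfl | hne := Ω.eq_empty_or_nonempty
  · exact ⟨0, by simp⟩
  have huniq : UniqueDiffOn ℝ (closure Ω) := uniqueDiffOn_convex hconv.closure
    (hne.mono (interior_maximal subset_closure hΩ))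
  have hu₁ := hasFDerivUpToBoundary_innerSL_gradientWithin hΩ (hu.of_le one_le_two) huniq
  have hfield : IsWeakNeumannField Ω (gradientWithin u (closure Ω)) (fun x => f (u x)) :=
    fun φ hφ => by
      rw [← hweak φ hφ]
      refine setIntegral_congr_fun hΩ.measurableSet fun x hx => ?_
      simp [gradientWithin_of_isOpen_of_mem_subset hΩ subset_closure hx]
  have hpotential : IsStablePotential Ω (fun x => deriv f (u x)) := fun φ hφ => by
    simpa [gradient] using hstable φ hφ
  have hzero := eqOn_zero_of_isWeakNeumannField_of_isStablePotential hf hΩ hΩb hconv hne hu₁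
    (hasFDerivUpToBoundary_fderivWithin hΩ (contDiffOn_gradientWithin hu huniq) huniq)
    (fun x hx => isSymmetric_fderivWithin_gradientWithin hu huniq
      (interior_maximal subset_closure hΩ hx)) hfield hpotential
  obtain ⟨x₀, hx₀⟩ := hne
  exact ⟨u x₀, hu₁.eqOn_const_of_fderiv_eq_zero hΩ hconv (fun x hx => by simp [hzero hx]) hx₀⟩

/-- **Casten–Holland, Matano.** In a bounded convex open set `Ω ⊆ ℝ^N`,
`N ≥ 2`, with `C²` boundary, every stable weak Neumann solution of `-Δu = f(u)` which is
`C²` up to the boundary is constant on `closure Ω`. -/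
theorem stmt_4 {N : ℕ} (hN : 2 ≤ N)
    (Ω : Set (EuclideanSpace ℝ (Fin N))) (hΩ_open : IsOpen Ω)
    (hΩ_bdd : IsBounded Ω) (hΩ_conn : IsConnected Ω) (hΩ_conv : Convex ℝ Ω)
    (hΩ_bdy : ∀ x ∈ frontier Ω, ∃ U g, IsC2LocalDefining Ω x U g)
    (f : ℝ → ℝ) (hf : ContDiff ℝ 1 f)
    (u : EuclideanSpace ℝ (Fin N) → ℝ)
    (V : Set (EuclideanSpace ℝ (Fin N))) (hV_open : IsOpen V)
    (hV : closure Ω ⊆ V) (hu : ContDiffOn ℝ 1 u V)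
    (hu2 : ContDiffOn ℝ 2 u (closure Ω))
    (hweak : ∀ φ : EuclideanSpace ℝ (Fin N) → ℝ, ContDiff ℝ 1 φ →
      ∫ x in Ω, ⟪gradient u x, gradient φ x⟫ = ∫ x in Ω, f (u x) * φ x)
    (hstable : ∀ φ : EuclideanSpace ℝ (Fin N) → ℝ, ContDiff ℝ 1 φ →
      ∫ x in Ω, deriv f (u x) * (φ x) ^ 2 ≤ ∫ x in Ω, ‖gradient φ x‖ ^ 2) :
    ∃ c : ℝ, ∀ x ∈ closure Ω, u x = c :=
  stmt_4_general hΩ_open hΩ_bdd hΩ_conv hf hu2 hweak hstable
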